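/- arXiv:1805.11448 — 3 statements merged into one kernel-verified Lean document; each statement's English description precedes it below -/
import Mathlib

section
/- Let R be an integral domain. If A is a skew PBW extension of R, then A is also an integral domain. -/
open Finsupp

noncomputable section

variable {R A : Type*}

/-- The ordered monomial `x₁^{α₁} ⋯ xₙ^{αₙ}` in a (possibly noncommutative) ring. -/
def spbwMon [Ring A] {n : ℕ} (x : Fin n → A) (α : Fin n →₀ ℕ) : A :=
  (List.ofFn fun i => x i ^ α i).prod

/-- `A` is a skew Poincaré–Birkhoff–Witt extension of `R` (embedded in `A` via `ι`)
with generators `x 0, …, x (n-1)`: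
(i) `R ⊆ A` (via the embedding `ι`);
(ii) `A` is a free left `R`-module with basis the monomials `x^α`, i.e. every element of `A`
has a unique representation as a finite `R`-linear combination of the monomials;
(iii) for each `i` and each nonzero `r ∈ R` there is a nonzero `c ∈ R` with
`x i * r - c * x i ∈ R`;
(iv) for all `i, j` there is a nonzero `c ∈ R` with
`x j * x i - c * (x i * x j) ∈ R + R x 0 + ⋯ + R x (n-1)`. -/
structure IsSkewPBWExtension [Ring R] [Ring A] (ι : R →+* A) {n : ℕ} (x : Fin n → A) :
    Prop where
  not_mem : ∀ i, x i ∉ Set.range ι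
  repr_uniq : ∀ a : A, ∃! c : (Fin n →₀ ℕ) →₀ R, a = c.sum fun α r => ι r * spbwMon x α
  var_coeff : ∀ i, ∀ r : R, r ≠ 0 →
    ∃ cr : R, cr ≠ 0 ∧ x i * ι r - ι cr * x i ∈ Set.range ι
  var_var : ∀ i j, ∃ cij : R, cij ≠ 0 ∧ ∃ r₀ : R, ∃ rv : Fin n → R,
    x j * x i - ι cij * (x i * x j) = ι r₀ + ∑ k, ι (rv k) * x k

/-!
Order the monomials degree-lexicographically. The leading monomial of `x i * x^δ` is the product
`xᵢ x^δ` of commutative monomials: when `i` exceeds the first variable `j` of `x^δ = x j * x^δ'`,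
rewriting `x i * x j` as a nonzero multiple of `x j * x i` plus terms of smaller degree reduces the
claim to the smaller monomials `x^δ'` and `xᵢ x^δ'`. Here `xᵢ x^δ' < x^δ` because the
degree-lexicographic order makes variables of smaller index larger. Hence leading monomials multiply
and, `R` having no zero divisors, a product of nonzero elements has a leading term.
-/

section LeadingTerm

variable {M N Γ Γ' : Type*} [Ring R] [AddCommGroup M] [Module R M] [AddCommGroup N] [Module R N]

section Preorder

variable [Preorder Γ] [Preorder Γ']

variable (R) in
/-- The `R`-span of the members of the family `v` with index below `γ`; it is where the lower-order
terms of an element of degree `γ` live. -/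
def lowerSpan (v : Γ → M) (γ : Γ) : Submodule R M :=
  Submodule.span R (v '' Set.Iio γ)

variable (R) in
/-- The degree of `a` with respect to the ordered family `v` is `γ`: up to lower-order terms, `a` is
a nonzero multiple of `v γ`. It is a relation, so that `0` simply has no degree. -/
def HasDegree (v : Γ → M) (a : M) (γ : Γ) : Prop :=
  ∃ c : R, c ≠ 0 ∧ a - c • v γ ∈ lowerSpan R v γ

variable {v : Γ → M} {w : Γ' → N} {a b : M} {γ δ : Γ}

theorem mem_lowerSpan (h : δ < γ) : v δ ∈ lowerSpan R v γ :=
  Submodule.subset_span (Set.mem_image_of_mem v h)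

theorem lowerSpan_mono : Monotone (lowerSpan R v) := fun _ _ h =>
  Submodule.span_mono (Set.image_mono (Set.Iio_subset_Iio h))

theorem map_mem_lowerSpan {f : M →+ N} {γ' : Γ'} (ha : a ∈ lowerSpan R v γ)
    (hf : ∀ δ < γ, ∀ r : R, f (r • v δ) ∈ lowerSpan R w γ') : f a ∈ lowerSpan R w γ' := by
  induction ha using Submodule.closure_induction with
  | zero => simp
  | add a b _ _ iha ihb => simpa using add_mem iha ihb
  | smul_mem r _ hm =>
    obtain ⟨δ, hδ, rfl⟩ := hm
    exact hf δ hδ r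

theorem hasDegree_self [Nontrivial R] (v : Γ → M) (γ : Γ) : HasDegree R v (v γ) γ :=
  ⟨1, one_ne_zero, by simp⟩

namespace HasDegree

theorem add_lower (ha : HasDegree R v a γ) (hb : b ∈ lowerSpan R v γ) :
    HasDegree R v (a + b) γ := by
  obtain ⟨c, hc, hlow⟩ := ha
  exact ⟨c, hc, by simpa only [sub_add_eq_add_sub] using add_mem hlow hb⟩

theorem smul [NoZeroDivisors R] {r : R} (hr : r ≠ 0) (ha : HasDegree R v a γ) :
    HasDegree R v (r • a) γ := by
  obtain ⟨c, hc, hlow⟩ := ha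
  refine ⟨r * c, mul_ne_zero hr hc, ?_⟩
  simpa only [smul_sub, mul_smul] using Submodule.smul_mem _ r hlow

theorem mem_lowerSpan (ha : HasDegree R v a δ) (h : δ < γ) : a ∈ lowerSpan R v γ := by
  obtain ⟨c, -, hlow⟩ := ha
  simpa only [sub_add_cancel] using
    add_mem (lowerSpan_mono h.le hlow) (Submodule.smul_mem _ c (_root_.mem_lowerSpan h))

theorem ne_zero (hv : LinearIndependent R v) (ha : HasDegree R v a γ) : a ≠ 0 := by
  rintro rfl
  obtain ⟨c, hc, hlow⟩ := ha
  rw [zero_sub, Submodule.neg_mem_iff] at hlow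
  refine hc (hv.eq_zero_of_smul_mem_span γ c (Submodule.span_mono (Set.image_mono ?_) hlow))
  exact fun δ hδ => ⟨trivial, ne_of_lt hδ⟩

theorem map {f : M →+ N} {θ : Γ → Γ'} (hθ : StrictMono θ) (ha : HasDegree R v a γ)
    (hf : ∀ δ ≤ γ, ∀ r : R, r ≠ 0 → HasDegree R w (f (r • v δ)) (θ δ)) :
    HasDegree R w (f a) (θ γ) := by
  obtain ⟨c, hc, hlow⟩ := ha
  have hf_low : f (a - c • v γ) ∈ lowerSpan R w (θ γ) := by
    refine map_mem_lowerSpan hlow fun δ hδ r => ?_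
    rcases eq_or_ne r 0 with rfl | hr
    · simp
    · exact (hf δ hδ.le r hr).mem_lowerSpan (hθ hδ)
  simpa only [map_sub, add_sub_cancel] using (hf γ le_rfl c hc).add_lower hf_low

end HasDegree

end Preorder

theorem exists_hasDegree [LinearOrder Γ] {v : Γ → M} {a : M}
    (ha : a ∈ Submodule.span R (Set.range v)) (ha0 : a ≠ 0) : ∃ γ, HasDegree R v a γ := by
  obtain ⟨c, rfl⟩ := Finsupp.mem_span_range_iff_exists_finsupp.1 ha
  have hne : c.support.Nonempty := by
    rw [Finsupp.support_nonempty_iff]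
    rintro rfl
    exact ha0 Finsupp.sum_zero_index
  have hmax := c.support.max'_mem hne
  refine ⟨c.support.max' hne, c _, Finsupp.mem_support_iff.1 hmax, ?_⟩
  rw [Finsupp.sum, ← Finset.add_sum_erase _ _ hmax, add_sub_cancel_left]
  exact sum_mem fun δ hδ =>
    Submodule.smul_mem _ _ (mem_lowerSpan (c.support.lt_max'_of_mem_erase_max' hne hδ))

section Mul

variable [Ring A] [Module R A] [IsScalarTower R A A] [NoZeroDivisors R] [AddCommMonoid Γ]
  {v : Γ → A} {a b : A} {α β : Γ}

theorem HasDegree.mul_of_forall_le [PartialOrder Γ] [IsOrderedCancelAddMonoid Γ]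
    (ha : HasDegree R v a α) (h : ∀ δ ≤ α, HasDegree R v (v δ * b) (δ + β)) :
    HasDegree R v (a * b) (α + β) := by
  refine ha.map (f := AddMonoidHom.mulRight b) (θ := (· + β)) add_left_strictMono
    fun δ hδ r hr => ?_
  simpa only [AddMonoidHom.mulRight_apply, smul_mul_assoc] using (h δ hδ).smul hr

theorem noZeroDivisors_of_hasDegree_mul [LinearOrder Γ] [IsOrderedCancelAddMonoid Γ]
    (hv : LinearIndependent R v) (hspan : Submodule.span R (Set.range v) = ⊤)
    (hmul : ∀ α β b, HasDegree R v b β → HasDegree R v (v α * b) (α + β)) : NoZeroDivisors A := by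
  refine ⟨fun {a b} hab => ?_⟩
  by_contra! hne
  obtain ⟨α, ha⟩ := exists_hasDegree (hspan ▸ Submodule.mem_top : a ∈ _) hne.1
  obtain ⟨β, hb⟩ := exists_hasDegree (hspan ▸ Submodule.mem_top : b ∈ _) hne.2
  exact (ha.mul_of_forall_le fun δ _ => hmul δ β b hb).ne_zero hv hab

end Mul

end LeadingTerm

section Monomial

variable {n : ℕ}

section Ring

variable [Ring A]

theorem spbwMon_zero (x : Fin n → A) : spbwMon x 0 = 1 := by
  simp [spbwMon]

theorem spbwMon_succ (x : Fin (n + 1) → A) (α : Fin (n + 1) →₀ ℕ) :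
    spbwMon x α = x 0 ^ α 0 * spbwMon (Fin.tail x) α.tail := by
  simp [spbwMon, Fin.tail, Finsupp.tail_apply, List.ofFn_succ]

theorem spbwMon_single_add (x : Fin n → A) {i : Fin n} {α : Fin n →₀ ℕ} (h : ∀ k < i, α k = 0) :
    spbwMon x (single i 1 + α) = x i * spbwMon x α := by
  induction n with
  | zero => exact i.elim0
  | succ n ih =>
    rw [spbwMon_succ, spbwMon_succ x α]
    induction i using Fin.cases with
    | zero =>
      have htail : (single 0 1 + α).tail = α.tail := by ext k; simp [Finsupp.tail_apply]
      simp [htail, pow_add, mul_assoc]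
    | succ i =>
      have htail : (single i.succ 1 + α).tail = single i 1 + α.tail := by
        ext k; simp [Finsupp.tail_apply, Finsupp.single_apply]
      have hα : ∀ k < i, α.tail k = 0 := fun k hk => h k.succ (Fin.succ_lt_succ_iff.2 hk)
      simp [htail, h 0 i.succ_pos, ih (Fin.tail x) hα, Fin.tail]

end Ring

theorem eq_zero_or_exists_eq_single_add (α : Fin n →₀ ℕ) :
    α = 0 ∨ ∃ j α', (∀ k < j, α' k = 0) ∧ α = single j 1 + α' := by
  induction α using Finsupp.induction_on_min with
  | zero => exact Or.inl rfl
  | single_add j m f hf hm _ =>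
    refine Or.inr ⟨j, single j (m - 1) + f, fun k hk => ?_, ?_⟩
    · have hfk : f k = 0 := Finsupp.notMem_support_iff.1 fun hmem => (hf k hmem).not_gt hk
      simp [hfk, hk.ne]
    · rw [← add_assoc, ← Finsupp.single_add, Nat.add_sub_cancel' (Nat.one_le_iff_ne_zero.2 hm)]

end Monomial

section SkewPBW

variable {n : ℕ}

/-- The monomials `x^α` as a family indexed by exponents in degree-lexicographic order. -/
def degLexMon [Ring A] (x : Fin n → A) (α : DegLex (Fin n →₀ ℕ)) : A :=
  spbwMon x (ofDegLex α)

/-- The exponent of the variable `x i`, in degree-lexicographic order. -/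
def varExp (i : Fin n) : DegLex (Fin n →₀ ℕ) :=
  toDegLex (single i 1)

theorem varExp_lt_varExp {i j : Fin n} (h : j < i) : varExp i < varExp j :=
  DegLex.single_lt_iff.2 h

theorem lt_varExp_add (i : Fin n) (α : DegLex (Fin n →₀ ℕ)) : α < varExp i + α :=
  DegLex.lt_iff.2 (Or.inl (by simp [varExp, ofDegLex_add]))

theorem varExp_add_lt_varExp_add_varExp_add (i j k : Fin n) (α : DegLex (Fin n →₀ ℕ)) :
    varExp k + α < varExp i + (varExp j + α) :=
  DegLex.lt_iff.2 (Or.inl (by simp [varExp, ofDegLex_add]))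

theorem degLexMon_varExp_add [Ring A] (x : Fin n → A) {i : Fin n} {α : DegLex (Fin n →₀ ℕ)}
    (h : ∀ k < i, ofDegLex α k = 0) : degLexMon x (varExp i + α) = x i * degLexMon x α :=
  spbwMon_single_add x h

theorem eq_zero_or_exists_eq_varExp_add (α : DegLex (Fin n →₀ ℕ)) :
    α = 0 ∨ ∃ j, ∃ α' : DegLex (Fin n →₀ ℕ), (∀ k < j, ofDegLex α' k = 0) ∧ α = varExp j + α' :=
  eq_zero_or_exists_eq_single_add (ofDegLex α)

variable [Ring R] [Ring A] [Module R A] [IsScalarTower R A A] {x : Fin n → A}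

namespace IsSkewPBWExtension

variable (h : IsSkewPBWExtension (RingHom.smulOneHom : R →+* A) x)
include h

theorem existsUnique_sum_smul (a : A) :
    ∃! c : (Fin n →₀ ℕ) →₀ R, a = c.sum fun α r => r • spbwMon x α := by
  simpa only [RingHom.smulOneHom_apply, smul_one_mul] using h.repr_uniq a

theorem linearIndependent_degLexMon : LinearIndependent R (degLexMon x) := by
  intro c d hcd
  exact (h.existsUnique_sum_smul (Finsupp.linearCombination R (degLexMon x) c)).unique rfl hcd

theorem span_range_degLexMon : Submodule.span R (Set.range (degLexMon x)) = ⊤ := by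
  refine Submodule.eq_top_iff'.2 fun a => ?_
  obtain ⟨c, hc, -⟩ := h.existsUnique_sum_smul a
  exact Finsupp.mem_span_range_iff_exists_finsupp.2 ⟨c, hc.symm⟩

theorem exists_var_mul_smul (i : Fin n) {r : R} (hr : r ≠ 0) :
    ∃ s : R, s ≠ 0 ∧ ∃ d : R, ∀ a, x i * (r • a) = s • (x i * a) + d • a := by
  obtain ⟨s, hs, d, hd⟩ := h.var_coeff i r hr
  refine ⟨s, hs, d, fun a => ?_⟩
  have hd' := congrArg (· * a) (sub_eq_iff_eq_add'.1 hd.symm)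
  simpa only [RingHom.smulOneHom_apply, add_mul, mul_assoc, smul_mul_assoc, one_mul]
    using hd'

theorem exists_var_mul_var_mul (i j : Fin n) :
    ∃ c : R, c ≠ 0 ∧ ∃ (r : R) (s : Fin n → R), ∀ a,
      x j * (x i * a) = c • (x i * (x j * a)) + (r • a + ∑ k, s k • (x k * a)) := by
  obtain ⟨c, hc, r, s, hcomm⟩ := h.var_var i j
  refine ⟨c, hc, r, s, fun a => ?_⟩
  have hcomm' := congrArg (· * a) (sub_eq_iff_eq_add'.1 hcomm)
  simpa only [RingHom.smulOneHom_apply, add_mul, mul_assoc, smul_mul_assoc, one_mul,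
    Finset.sum_mul] using hcomm'

variable [NoZeroDivisors R] {b : A} {β : DegLex (Fin n →₀ ℕ)}

theorem hasDegree_var_mul_of_forall_le (i : Fin n) (hb : HasDegree R (degLexMon x) b β)
    (hi : ∀ δ ≤ β, HasDegree R (degLexMon x) (x i * degLexMon x δ) (varExp i + δ)) :
    HasDegree R (degLexMon x) (x i * b) (varExp i + β) := by
  refine hb.map (f := AddMonoidHom.mulLeft (x i)) add_right_strictMono fun δ hδ r hr => ?_
  obtain ⟨s, hs, d, hsd⟩ := h.exists_var_mul_smul i hr
  rw [AddMonoidHom.coe_mulLeft, hsd]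
  exact ((hi δ hδ).smul hs).add_lower
    (Submodule.smul_mem _ d (mem_lowerSpan (lt_varExp_add i δ)))

variable [Nontrivial R]

theorem hasDegree_var_mul_degLexMon (i : Fin n) (δ : DegLex (Fin n →₀ ℕ)) :
    HasDegree R (degLexMon x) (x i * degLexMon x δ) (varExp i + δ) := by
  induction δ using WellFoundedLT.induction generalizing i with
  | _ δ ih =>
  by_cases hi : ∀ k < i, ofDegLex δ k = 0
  · rw [← degLexMon_varExp_add x hi]
    exact hasDegree_self _ _
  obtain rfl | ⟨j, δ', hδ', rfl⟩ := eq_zero_or_exists_eq_varExp_add δ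
  · exact absurd (fun _ _ => rfl) hi
  have hji : j < i := by
    by_contra! hij
    refine hi fun k hk => ?_
    simp [varExp, ofDegLex_add, hδ' k (hk.trans_le hij), (hk.trans_le hij).ne]
  have hδ'_lt := lt_varExp_add j δ'
  have hiδ'_lt : varExp i + δ' < varExp j + δ' := add_left_strictMono (varExp_lt_varExp hji)
  have hlead : HasDegree R (degLexMon x) (x j * (x i * degLexMon x δ'))
      (varExp i + (varExp j + δ')) := by
    rw [add_left_comm]
    exact h.hasDegree_var_mul_of_forall_le j (ih δ' hδ'_lt i)
      fun η hη => ih η (hη.trans_lt hiδ'_lt) j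
  obtain ⟨c, hc, r, s, hcomm⟩ := h.exists_var_mul_var_mul j i
  rw [degLexMon_varExp_add x hδ', hcomm]
  refine (hlead.smul hc).add_lower (add_mem ?_ (sum_mem fun k _ => ?_))
  · exact Submodule.smul_mem _ r (mem_lowerSpan (hδ'_lt.trans (lt_varExp_add i _)))
  · exact Submodule.smul_mem _ (s k)
      ((ih δ' hδ'_lt k).mem_lowerSpan (varExp_add_lt_varExp_add_varExp_add i j k δ'))

theorem hasDegree_var_mul (i : Fin n) (hb : HasDegree R (degLexMon x) b β) :
    HasDegree R (degLexMon x) (x i * b) (varExp i + β) :=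
  h.hasDegree_var_mul_of_forall_le i hb fun δ _ => h.hasDegree_var_mul_degLexMon i δ

theorem hasDegree_degLexMon_mul (α : DegLex (Fin n →₀ ℕ)) (hb : HasDegree R (degLexMon x) b β) :
    HasDegree R (degLexMon x) (degLexMon x α * b) (α + β) := by
  induction α using WellFoundedLT.induction with
  | _ α ih =>
  obtain rfl | ⟨j, α', hα', rfl⟩ := eq_zero_or_exists_eq_varExp_add α
  · have hone : degLexMon x 0 = 1 := spbwMon_zero x
    rwa [hone, one_mul, zero_add]
  · rw [degLexMon_varExp_add x hα', mul_assoc, add_assoc]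
    exact h.hasDegree_var_mul j (ih α' (lt_varExp_add j α'))

end IsSkewPBWExtension

end SkewPBW

theorem skewPBW_isDomain_general [Ring R] [IsDomain R] [Ring A] (ι : R →+* A) {n : ℕ}
    (x : Fin n → A) (h : IsSkewPBWExtension ι x) : IsDomain A := by
  -- Every `ι` comes from a left `R`-module structure on `A`, as `r ↦ r • 1`.
  obtain ⟨⟨_, _⟩, rfl⟩ := ringHomEquivModuleIsScalarTower.symm.surjective ι
  have hindep := h.linearIndependent_degLexMon
  have : Nontrivial A := ⟨degLexMon x 0, 0, hindep.ne_zero 0⟩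
  have : NoZeroDivisors A := noZeroDivisors_of_hasDegree_mul hindep h.span_range_degLexMon
    fun α _ _ hb => h.hasDegree_degLexMon_mul α hb
  exact NoZeroDivisors.to_isDomain A

/-- If `R` is an integral domain and `A` is a skew PBW extension of `R`,
then `A` is a domain. -/
theorem skewPBW_isDomain [CommRing R] [IsDomain R] [Ring A] (ι : R →+* A) {n : ℕ}
    (x : Fin n → A) (h : IsSkewPBWExtension ι x) : IsDomain A :=
  skewPBW_isDomain_general ι x h
end
end

section
/- Let 𝕜 be a field with a derivation δ and let F be its subfield of constants. If P is an element of S = 𝕜[x; id_𝕜, δ] of positive degree n with invertible leading coefficient, then C_S(P) is a free F[P]-module of rank at most n². -/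
open Finsupp

noncomputable section

variable {R S : Type*}

/-- `S` is the Ore extension `R[x; σ, δ]` of `R` (embedded in `S` via `ι`):
`δ` is a `σ`-derivation of `R`, `S` is a free left `R`-module with basis `1, x, x², …`,
and `x * r = σ(r) * x + δ(r)` for all `r ∈ R`. -/
structure IsOreExtension [Ring R] [Ring S] (ι : R →+* S) (σ : R →+* R) (δ : R → R)
    (x : S) : Prop where
  deriv_add : ∀ a b : R, δ (a + b) = δ a + δ b
  deriv_mul : ∀ a b : R, δ (a * b) = σ a * δ b + δ a * b
  repr_uniq : ∀ s : S, ∃! c : ℕ →₀ R, s = c.sum fun i r => ι r * x ^ i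
  comm_rule : ∀ r : R, x * ι r = ι (σ r) * x + ι (δ r)

/-- The (unique) coefficient family of `s` with respect to the basis `1, x, x², …`. -/
def oreCoeff [Ring R] [Ring S] {ι : R →+* S} {σ : R →+* R} {δ : R → R} {x : S}
    (h : IsOreExtension ι σ δ x) (s : S) : ℕ →₀ R :=
  (h.repr_uniq s).exists.choose

/-- The degree (in `x`) of an element of the Ore extension. -/
def oreDeg [Ring R] [Ring S] {ι : R →+* S} {σ : R →+* R} {δ : R → R} {x : S}
    (h : IsOreExtension ι σ δ x) (s : S) : ℕ :=
  (oreCoeff h s).support.sup id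

/-- The leading coefficient (in `x`) of an element of the Ore extension. -/
def oreLeadCoeff [Ring R] [Ring S] {ι : R →+* S} {σ : R →+* R} {δ : R → R} {x : S}
    (h : IsOreExtension ι σ δ x) (s : S) : R :=
  oreCoeff h s (oreDeg h s)

/-- The centralizer of `a`: all elements commuting with `a`. -/
def centralizerOf [Ring S] (a : S) : Set S := {b | b * a = a * b}

/-- The set of "polynomials in `P` with coefficients in `F`", i.e. all finite sums
`Σ_j ι(b_j) * P^j` with every `b_j ∈ F`. -/
def polysIn [Ring R] [Ring S] (ι : R →+* S) (F : Set R) (P : S) : Set S :=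
  {s | ∃ d : ℕ →₀ R, (∀ j, d j ∈ F) ∧ s = d.sum fun j b => ι b * P ^ j}

/-- The subset `M` of `S` is a free module of rank at most `nbound` over the coefficient
subring `coeffs ⊆ S` (acting by left multiplication). -/
def IsFreeModuleOfRankAtMost [Ring S] (coeffs : Set S) (M : Set S) (nbound : ℕ) : Prop :=
  ∃ m ≤ nbound, ∃ u : Fin m → S, (∀ i, u i ∈ M) ∧
    ∀ e ∈ M, ∃! c : Fin m → S, (∀ i, c i ∈ coeffs) ∧ e = ∑ i, c i * u i

/-- The subset `M` of `S` is a free module of finite rank over the coefficient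
subring `coeffs ⊆ S` (acting by left multiplication). -/
def IsFreeModuleOfFiniteRank [Ring S] (coeffs : Set S) (M : Set S) : Prop :=
  ∃ m : ℕ, ∃ u : Fin m → S, (∀ i, u i ∈ M) ∧
    ∀ e ∈ M, ∃! c : Fin m → S, (∀ i, c i ∈ coeffs) ∧ e = ∑ i, c i * u i

/-- A subset `F` of a ring is a field (with the induced operations): it is nontrivial and
every nonzero element of `F` has a multiplicative inverse lying in `F`. -/
def IsFieldSubset [Ring R] (F : Set R) : Prop :=
  (0 : R) ≠ 1 ∧ ∀ a ∈ F, a ≠ 0 → ∃ b ∈ F, a * b = 1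

/-!
Right multiplication by an element of `C = C_S(P)` is an endomorphism of the left `S`-module
`V = S / SP`, and it vanishes only on `PC`. By the division algorithm `V` has `𝕜`-dimension at most
`n`. The variable `x` acts on `V` as a connection over `δ`, and `End_S V` is the space of horizontal
vectors of the induced connection on `End_𝕜 V`. By the Wronskian argument, horizontal vectors that
are independent over the constants `F` are independent over `𝕜`, so `dim_F C / PC ≤ n²`.

Let `X` act on `C` as multiplication by `P`. Since `P` raises the degree, `C` is torsion-free and
finitely generated over the principal ideal domain `F[X]`, hence free, and the images of a basis in
`C / PC` are `F`-independent.
-/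

open Polynomial

section DegreeFiltration

variable {F M W κ : Type*} [Field F] [AddCommGroup M] [Module F M] [Module F[X] M]
  [AddCommGroup W] [Module F W]

/-- An exhaustive filtration of an `F[X]`-module by `F`-subspaces `0 = L 0 ≤ L 1 ≤ …` whose
degree is strictly raised by multiplication by `X`; `L d` plays the role of the elements of
degree less than `d`. -/
structure IsDegreeFiltration (L : ℕ → Submodule F M) : Prop where
  monotone : Monotone L
  zero : L 0 = ⊥
  exists_mem : ∀ m, ∃ d, m ∈ L d
  mem_of_X_smul_mem : ∀ {d m}, (X : F[X]) • m ∈ L (d + 1) → m ∈ L d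

namespace IsDegreeFiltration

variable {L : ℕ → Submodule F M}

theorem eq_zero_of_X_smul_eq_zero (hL : IsDegreeFiltration L) {m : M}
    (hm : (X : F[X]) • m = 0) : m = 0 := by
  have hm0 : m ∈ L 0 := hL.mem_of_X_smul_mem (by rw [hm]; exact zero_mem _)
  rwa [hL.zero, Submodule.mem_bot] at hm0

theorem eq_zero_of_smul_eq_zero_of_isCoprime_X (hL : IsDegreeFiltration L) {g : F[X]}
    (hg : IsCoprime X g) {m : M} (hm : g • m = 0) : m = 0 := by
  obtain ⟨a, b, hab⟩ := hg
  obtain ⟨d, hd⟩ := hL.exists_mem m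
  -- `m = X • a • m` and `a • m` is again killed by `g`, so the degree can be lowered.
  induction d generalizing m with
  | zero => rwa [hL.zero, Submodule.mem_bot] at hd
  | succ d ih =>
    have hXm : (X : F[X]) • a • m = m := by
      rw [smul_smul, mul_comm, ← add_zero ((a * X) • m), ← smul_zero b, ← hm, smul_smul,
        ← add_smul, hab, one_smul]
    have ham : a • m = 0 :=
      ih (by rw [smul_comm, hm, smul_zero]) (hL.mem_of_X_smul_mem (by rwa [hXm]))
    rw [← hXm, ham, smul_zero]

theorem isTorsionFree (hL : IsDegreeFiltration L) : Module.IsTorsionFree F[X] M := by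
  refine .of_smul_eq_zero fun f m hm ↦ or_iff_not_imp_left.2 fun hf ↦ ?_
  obtain ⟨k, g, hXg, rfl⟩ := WfDvdMonoid.max_power_factor hf irreducible_X
  refine hL.eq_zero_of_smul_eq_zero_of_isCoprime_X (irreducible_X.coprime_iff_not_dvd.2 hXg) ?_
  clear hf
  induction k with
  | zero => rwa [pow_zero, one_mul] at hm
  | succ k ih =>
    rw [pow_succ', mul_assoc, mul_smul] at hm
    exact ih (hL.eq_zero_of_X_smul_eq_zero hm)

theorem span_eq_top (hL : IsDegreeFiltration L) {ψ : M →ₗ[F] W}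
    (hψ : ∀ m, ψ m = 0 → ∃ q, (X : F[X]) • q = m) {d : ℕ}
    (hd : (L d).map ψ = LinearMap.range ψ) : Submodule.span F[X] (L d : Set M) = ⊤ := by
  refine eq_top_iff.2 fun m _ ↦ ?_
  obtain ⟨e, he⟩ := hL.exists_mem m
  induction e generalizing m with
  | zero => exact Submodule.subset_span (hL.monotone d.zero_le he)
  | succ e ih =>
    rcases le_or_gt (e + 1) d with hed | hde
    · exact Submodule.subset_span (hL.monotone hed he)
    obtain ⟨b, hb, hbm⟩ : ψ m ∈ (L d).map ψ := hd ▸ LinearMap.mem_range_self ψ m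
    obtain ⟨q, hq⟩ := hψ (m - b) (by rw [map_sub, hbm, sub_self])
    have hqe : q ∈ L e := hL.mem_of_X_smul_mem (hq ▸ sub_mem he (hL.monotone hde.le hb))
    rw [← sub_add_cancel m b, ← hq]
    exact add_mem (Submodule.smul_mem _ _ (ih q trivial hqe)) (Submodule.subset_span hb)

variable [Module.Finite F W]

theorem exists_map_eq_range (hL : IsDegreeFiltration L) (ψ : M →ₗ[F] W) :
    ∃ d, (L d).map ψ = LinearMap.range ψ := by
  obtain ⟨d, hd⟩ := monotone_stabilizes_iff_noetherian.2 (inferInstance : IsNoetherian F W)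
    ⟨fun d ↦ (L d).map ψ, fun _ _ h ↦ Submodule.map_mono (hL.monotone h)⟩
  refine ⟨d, le_antisymm LinearMap.map_le_range ?_⟩
  rintro _ ⟨m, rfl⟩
  obtain ⟨e, he⟩ := hL.exists_mem m
  have hm : ψ m ∈ (L (max d e)).map ψ := ⟨m, hL.monotone (le_max_right d e) he, rfl⟩
  exact (hd _ (le_max_left d e)).ge hm

variable [IsScalarTower F F[X] M] {ψ : M →ₗ[F] W}

theorem fg (hL : IsDegreeFiltration L) (hψ : ∀ m, ψ m = 0 → ∃ q, (X : F[X]) • q = m) (d : ℕ) :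
    (L d).FG := by
  induction d with
  | zero => exact hL.zero ▸ Submodule.fg_bot
  | succ d ih =>
    refine Submodule.fg_of_fg_map_of_fg_inf_ker ψ (IsNoetherian.noetherian _) ?_
    refine (ih.map (Algebra.lsmul F F M (X : F[X]))).of_le ?_
    rintro m ⟨hm, hψm⟩
    obtain ⟨q, rfl⟩ := hψ m hψm
    exact ⟨q, hL.mem_of_X_smul_mem hm, rfl⟩

theorem moduleFinite (hL : IsDegreeFiltration L)
    (hψ : ∀ m, ψ m = 0 → ∃ q, (X : F[X]) • q = m) : Module.Finite F[X] M := by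
  obtain ⟨d, hd⟩ := hL.exists_map_eq_range ψ
  obtain ⟨s, hs⟩ := hL.fg hψ d
  refine ⟨⟨s, ?_⟩⟩
  rw [← hL.span_eq_top hψ hd, ← hs, Submodule.span_span_of_tower]

end IsDegreeFiltration

variable [IsScalarTower F F[X] M] {ψ : M →ₗ[F] W}

theorem linearIndependent_comp_basis_of_ker_le_X_smul (b : Module.Basis κ F[X] M)
    (hψ : ∀ m, ψ m = 0 → ∃ q, (X : F[X]) • q = m) : LinearIndependent F (ψ ∘ b) := by
  classical
  refine linearIndependent_iff.2 fun c hc ↦ Finsupp.ext fun i ↦ ?_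
  rw [← Finsupp.apply_linearCombination] at hc
  obtain ⟨q, hq⟩ := hψ _ hc
  have hrepr : X * b.repr q i = C (c i) := by
    rw [← smul_eq_mul, ← Finsupp.smul_apply, ← map_smul, hq, Finsupp.linearCombination_apply,
      Finsupp.sum, map_sum, Finsupp.finsetSum_apply]
    simp_rw [← algebraMap_smul F[X] (c _), map_smul, Finsupp.smul_apply, b.repr_self]
    simp only [Finsupp.single_apply, smul_eq_mul, algebraMap_eq, mul_ite, mul_one, mul_zero,
      Finset.sum_ite_eq', Finsupp.mem_support_iff, ite_not]
    split_ifs with hci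
    · rw [hci, map_zero]
    · rfl
  simpa using congrArg (coeff · 0) hrepr.symm

theorem IsDegreeFiltration.exists_basis [Module.Finite F W] {L : ℕ → Submodule F M}
    (hL : IsDegreeFiltration L) (hψ : ∀ m, ψ m = 0 → ∃ q, (X : F[X]) • q = m) :
    ∃ m ≤ Module.finrank F W, Nonempty (Module.Basis (Fin m) F[X] M) := by
  have := hL.moduleFinite hψ
  have := hL.isTorsionFree
  let b := Module.finBasis F[X] M
  have hb := linearIndependent_comp_basis_of_ker_le_X_smul b hψ
  exact ⟨_, by simpa using hb.fintype_card_le_finrank, ⟨b⟩⟩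

end DegreeFiltration

section Connection

/-- `D` satisfies the Leibniz rule of a connection over `δ`: for `x ∈ 𝕜[x; id, δ]` the rule
`x * k = k * x + δ k` makes left multiplication by `x` such an operator. Additivity of `D` is
left to the bundled map it comes from. -/
def IsConnection {K M : Type*} [Add M] [SMul K M] (δ : K → K) (D : M → M) : Prop :=
  ∀ (k : K) (m : M), D (k • m) = k • D m + δ k • m

theorem IsConnection.smul {K S V : Type*} [Ring K] [Ring S] [Module K S]
    [AddCommGroup V] [Module K V] [Module S V] [IsScalarTower K S V] {δ : K → K} {x : S}
    (hx : IsConnection δ fun s : S ↦ x * s) : IsConnection δ fun v : V ↦ x • v := by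
  intro k v
  simpa [mul_smul, add_smul] using congrArg (· • v) (hx k 1)

variable {F K M V : Type*} [Field F] [Field K] [Algebra F K] {δ : K → K}
  [AddCommGroup M] [Module F M] [Module K M] [IsScalarTower F K M]

/- The classical Wronskian argument: normalise one coefficient of a `K`-linear relation to `1` and
apply `D`; this leaves a shorter relation, so all coefficients are constants. -/
theorem IsConnection.linearIndependent_of_horizontal {κ : Type*} {D : M →ₗ[F] M}
    (hD : IsConnection δ D) (hδ : ∀ k, δ k = 0 ↔ k ∈ Set.range (algebraMap F K)) {v : κ → M}
    (hv : ∀ i, D (v i) = 0) (hli : LinearIndependent F v) : LinearIndependent K v := by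
  classical
  refine linearIndependent_iff'.2 fun s ↦ ?_
  induction s using Finset.induction_on with
  | empty => simp
  | insert j s hj ih =>
    intro k hk
    have hkj : k j = 0 := by
      by_contra hkj
      set l : κ → K := fun i ↦ (k j)⁻¹ * k i
      have hlj : l j = 1 := inv_mul_cancel₀ hkj
      have hl : ∑ i ∈ insert j s, l i • v i = 0 := by
        simp_rw [l, mul_smul, ← Finset.smul_sum, hk, smul_zero]
      have hδlj : δ (l j) = 0 := (hδ _).2 ⟨1, by rw [map_one, hlj]⟩
      have hδl : ∑ i ∈ insert j s, δ (l i) • v i = 0 := by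
        simpa [map_sum, hD _ _, hv] using congrArg D hl
      rw [Finset.sum_insert hj, hδlj, zero_smul, zero_add] at hδl
      have hconst : ∀ i ∈ insert j s, ∃ c, algebraMap F K c = l i := fun i hi ↦
        (hδ _).1 ((Finset.mem_insert.1 hi).elim (fun h ↦ h ▸ hδlj) (ih _ hδl i))
      choose! c hc using hconst
      have hcj : c j = 0 := by
        refine linearIndependent_iff'.1 hli _ c ?_ j (Finset.mem_insert_self j s)
        rw [← hl]
        exact Finset.sum_congr rfl fun i hi ↦ by rw [← hc i hi, algebraMap_smul]
      have := hc j (Finset.mem_insert_self j s)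
      rw [hcj, hlj, map_zero] at this
      exact zero_ne_one this
    rw [Finset.sum_insert hj, hkj, zero_smul, zero_add] at hk
    exact fun i hi ↦ (Finset.mem_insert.1 hi).elim (fun h ↦ h ▸ hkj) (ih k hk i)

theorem IsConnection.rank_ker_le {D : M →ₗ[F] M} (hD : IsConnection δ D)
    (hδ : ∀ k, δ k = 0 ↔ k ∈ Set.range (algebraMap F K)) :
    Module.rank F (LinearMap.ker D) ≤ Module.rank K M := by
  let b := Module.Basis.ofVectorSpace F (LinearMap.ker D)
  rw [← b.mk_eq_rank'']
  have hb := b.linearIndependent.map' _ (Submodule.ker_subtype _)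
  exact (hD.linearIndependent_of_horizontal hδ (fun i ↦ (b i).2) hb).cardinal_le_rank

variable [AddCommGroup V] [Module F V] [Module K V] [IsScalarTower F K V]

/-- The connection induced on `End_K V` by a connection `D` on `V`, namely `φ ↦ D ∘ φ - φ ∘ D`;
its horizontal elements are the endomorphisms commuting with `D`. -/
def IsConnection.commutator {D : V →ₗ[F] V} (hD : IsConnection δ D) :
    Module.End K V →ₗ[F] Module.End K V where
  toFun φ :=
    { toFun := fun v ↦ D (φ v) - φ (D v)
      map_add' := fun v w ↦ by
        simp only [map_add]
        abel
      map_smul' := fun k v ↦ by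
        simp only [map_smul, map_add, hD k _, smul_sub, RingHom.id_apply]
        abel }
  map_add' φ ψ := by
    ext v
    simp only [LinearMap.coe_mk, AddHom.coe_mk, LinearMap.add_apply, map_add]
    abel
  map_smul' c φ := by
    ext v
    simp [smul_sub]

theorem IsConnection.isConnection_commutator {D : V →ₗ[F] V} (hD : IsConnection δ D) :
    IsConnection δ hD.commutator := by
  intro k φ
  ext v
  simp only [commutator, LinearMap.coe_mk, AddHom.coe_mk, LinearMap.smul_apply,
    LinearMap.add_apply, hD k _, smul_sub]
  abel

variable {S : Type*} [Ring S] [Algebra F S] [Module S V] [IsScalarTower F S V]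
  [Module K S] [IsScalarTower K S V] {x : S}

theorem IsConnection.rank_end_le (hδ : ∀ k, δ k = 0 ↔ k ∈ Set.range (algebraMap F K))
    (hx : IsConnection δ fun v : V ↦ x • v) :
    Module.rank F (Module.End S V) ≤ Module.rank K (Module.End K V) := by
  have hD : IsConnection δ (Algebra.lsmul F F V x) := hx
  let res : Module.End S V →ₗ[F] LinearMap.ker hD.commutator :=
    (LinearMap.restrictScalarsₗ K S V V F).codRestrict _ fun φ ↦ by
      ext v
      exact sub_eq_zero.2 (φ.map_smul x v).symm
  have hres : Function.Injective res := fun φ ψ h ↦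
    LinearMap.restrictScalars_injective K (congrArg Subtype.val h)
  exact (LinearMap.rank_le_of_injective res hres).trans (hD.isConnection_commutator.rank_ker_le hδ)

theorem IsConnection.finite_end [Module.Finite K V]
    (hδ : ∀ k, δ k = 0 ↔ k ∈ Set.range (algebraMap F K))
    (hx : IsConnection δ fun v : V ↦ x • v) :
    Module.Finite F (Module.End S V) :=
  Module.rank_lt_aleph0_iff.1 ((hx.rank_end_le hδ).trans_lt (Module.rank_lt_aleph0 K _))

theorem IsConnection.finrank_end_le [Module.Finite K V]
    (hδ : ∀ k, δ k = 0 ↔ k ∈ Set.range (algebraMap F K))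
    (hx : IsConnection δ fun v : V ↦ x • v) :
    Module.finrank F (Module.End S V) ≤ Module.finrank K V ^ 2 := by
  rw [sq, ← Module.finrank_linearMap K K]
  exact Cardinal.toNat_le_toNat (hx.rank_end_le hδ) (Module.rank_lt_aleph0 K _)

end Connection

section OreDegree

variable {K S : Type*} [Ring S]

/-- The elements of degree less than `d` of an Ore extension with variable `x`. -/
def oreDegreeLT (K : Type*) [Ring K] [Module K S] (x : S) (d : ℕ) : Submodule K S :=
  Submodule.span K ((fun i ↦ x ^ i) '' Set.Iio d)

/-- `s = c x^d + (terms of degree less than d)`, where `c = 0` is allowed. -/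
def HasLeadingTerm [Ring K] [Module K S] (x s : S) (d : ℕ) (c : K) : Prop :=
  s - c • x ^ d ∈ oreDegreeLT K x d

section Ring

variable [Ring K] [Module K S] {δ : K → K} {x P q s t : S} {a c : K} {d i n : ℕ}

theorem oreDegreeLT_mono (x : S) : Monotone (oreDegreeLT K x) := fun _ _ h ↦
  Submodule.span_mono (Set.image_mono (Set.Iio_subset_Iio h))

theorem oreDegreeLT_zero (x : S) : oreDegreeLT K x 0 = ⊥ := by
  simp [oreDegreeLT]

theorem pow_mem_oreDegreeLT (x : S) (h : i < d) : x ^ i ∈ oreDegreeLT K x d :=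
  Submodule.subset_span ⟨i, h, rfl⟩

instance finite_oreDegreeLT (d : ℕ) (x : S) : Module.Finite K (oreDegreeLT K x d) :=
  Module.Finite.span_of_finite K ((Set.finite_Iio d).image _)

theorem finrank_oreDegreeLT_le [StrongRankCondition K] (d : ℕ) (x : S) :
    Module.finrank K (oreDegreeLT K x d) ≤ d := by
  classical
  have h := finrank_span_finset_le_card (R := K) ((Finset.range d).image fun i ↦ x ^ i)
  rw [Finset.coe_image, Finset.coe_range] at h
  exact h.trans (Finset.card_image_le.trans_eq (Finset.card_range d))

theorem exists_hasLeadingTerm (hs : s ∈ oreDegreeLT K x (d + 1)) :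
    ∃ c : K, HasLeadingTerm x s d c := by
  rw [oreDegreeLT, ← Order.succ_eq_add_one, Order.Iio_succ_eq_insert, Set.image_insert_eq,
    Submodule.mem_span_insert] at hs
  obtain ⟨c, z, hz, rfl⟩ := hs
  exact ⟨c, by rwa [HasLeadingTerm, add_sub_cancel_left]⟩

namespace HasLeadingTerm

theorem mem_oreDegreeLT_succ (hs : HasLeadingTerm x s d c) : s ∈ oreDegreeLT K x (d + 1) := by
  rw [← sub_add_cancel s (c • x ^ d)]
  exact add_mem (oreDegreeLT_mono x d.le_succ hs)
    (Submodule.smul_mem _ _ (pow_mem_oreDegreeLT x d.lt_succ_self))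

theorem sub_mem_oreDegreeLT (hs : HasLeadingTerm x s d c) (ht : HasLeadingTerm x t d c) :
    s - t ∈ oreDegreeLT K x d := by
  simpa using sub_mem hs ht

theorem smul (k : K) (hs : HasLeadingTerm x s d c) : HasLeadingTerm x (k • s) d (k * c) := by
  simpa [HasLeadingTerm, smul_sub, mul_smul] using Submodule.smul_mem _ k hs

theorem add_of_mem_oreDegreeLT (hs : HasLeadingTerm x s d c) (ht : t ∈ oreDegreeLT K x d) :
    HasLeadingTerm x (s + t) d c := by
  rw [HasLeadingTerm, add_sub_right_comm]
  exact add_mem hs ht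

theorem eq_zero_of_mem_oreDegreeLT (hli : LinearIndependent K fun i : ℕ ↦ x ^ i)
    (hs : HasLeadingTerm x s d c) (hsd : s ∈ oreDegreeLT K x d) : c = 0 := by
  refine linearIndependent_iff_eq_zero_of_smul_mem_span.1 hli d c ?_
  have hcd : c • x ^ d ∈ oreDegreeLT K x d := by simpa using sub_mem hsd hs
  have hIio : Set.Iio d ⊆ Set.univ \ {d} := fun i hi ↦ ⟨trivial, ne_of_lt hi⟩
  exact Submodule.span_mono (Set.image_mono hIio) hcd

end HasLeadingTerm

theorem mul_mem_oreDegreeLT_succ (hx : IsConnection δ fun s : S ↦ x * s)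
    (hs : s ∈ oreDegreeLT K x d) : x * s ∈ oreDegreeLT K x (d + 1) := by
  induction hs using Submodule.span_induction with
  | mem _ hs =>
    obtain ⟨i, hi, rfl⟩ := hs
    rw [← pow_succ']
    exact pow_mem_oreDegreeLT x (Nat.succ_lt_succ hi)
  | zero => simp
  | add s t _ _ hs ht => rw [mul_add]; exact add_mem hs ht
  | smul k s hs hxs =>
    rw [show x * k • s = k • (x * s) + δ k • s from hx k s]
    exact add_mem (Submodule.smul_mem _ _ hxs)
      (Submodule.smul_mem _ _ (oreDegreeLT_mono x d.le_succ hs))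

theorem HasLeadingTerm.pow_mul (hx : IsConnection δ fun s : S ↦ x * s)
    (hP : HasLeadingTerm x P n a) (i : ℕ) : HasLeadingTerm x (x ^ i * P) (i + n) a := by
  induction i with
  | zero => simpa using hP
  | succ i ih =>
    have hlower : δ a • x ^ (i + n) ∈ oreDegreeLT K x (i + n + 1) :=
      Submodule.smul_mem _ _ (pow_mem_oreDegreeLT x (Nat.lt_succ_self _))
    have hxa : x * a • x ^ (i + n) = a • x ^ (i + n + 1) + δ a • x ^ (i + n) := by
      rw [pow_succ']
      exact hx a _
    have h := add_mem (mul_mem_oreDegreeLT_succ hx ih) hlower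
    rwa [mul_sub, hxa, ← sub_sub, sub_add_cancel, ← mul_assoc, ← pow_succ',
      Nat.add_right_comm] at h

variable [IsScalarTower K S S]

theorem mul_mem_oreDegreeLT (hx : IsConnection δ fun s : S ↦ x * s)
    (hP : HasLeadingTerm x P n a) (hq : q ∈ oreDegreeLT K x d) :
    q * P ∈ oreDegreeLT K x (d + n) := by
  induction hq using Submodule.span_induction with
  | mem _ hq =>
    obtain ⟨i, hi, rfl⟩ := hq
    have hin : i + n + 1 ≤ d + n := by have : i < d := hi; omega
    exact oreDegreeLT_mono x hin (hP.pow_mul hx i).mem_oreDegreeLT_succ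
  | zero => simp
  | add q r _ _ hq hr => rw [add_mul]; exact add_mem hq hr
  | smul k q _ hq => rw [smul_mul_assoc]; exact Submodule.smul_mem _ _ hq

theorem HasLeadingTerm.mul (hx : IsConnection δ fun s : S ↦ x * s)
    (hq : HasLeadingTerm x q d c) (hP : HasLeadingTerm x P n a) :
    HasLeadingTerm x (q * P) (d + n) (c * a) := by
  have h := ((hP.pow_mul hx d).smul c).add_of_mem_oreDegreeLT (mul_mem_oreDegreeLT hx hP hq)
  rwa [sub_mul, smul_mul_assoc, add_sub_cancel] at h

theorem mem_oreDegreeLT_of_mul_mem [NoZeroDivisors K] (hx : IsConnection δ fun s : S ↦ x * s)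
    (hli : LinearIndependent K fun i : ℕ ↦ x ^ i) (htop : ∀ s, ∃ d, s ∈ oreDegreeLT K x d)
    (hP : HasLeadingTerm x P n a) (ha : a ≠ 0) (h : q * P ∈ oreDegreeLT K x (d + n)) :
    q ∈ oreDegreeLT K x d := by
  obtain ⟨e, he⟩ := htop q
  induction e with
  | zero => exact oreDegreeLT_mono x d.zero_le he
  | succ e ih =>
    rcases le_or_gt (e + 1) d with hed | hde
    · exact oreDegreeLT_mono x hed he
    obtain ⟨c, hc⟩ := exists_hasLeadingTerm he
    have hca : c * a = 0 := (hc.mul hx hP).eq_zero_of_mem_oreDegreeLT hli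
      (oreDegreeLT_mono x (by omega) h)
    have hc0 : c = 0 := (mul_eq_zero.1 hca).resolve_right ha
    exact ih (by simpa [HasLeadingTerm, hc0] using hc)

theorem isRightRegular_of_hasLeadingTerm [NoZeroDivisors K] (hx : IsConnection δ fun s : S ↦ x * s)
    (hli : LinearIndependent K fun i : ℕ ↦ x ^ i) (htop : ∀ s, ∃ d, s ∈ oreDegreeLT K x d)
    (hP : HasLeadingTerm x P n a) (ha : a ≠ 0) : IsRightRegular P := by
  refine isRightRegular_of_non_zero_divisor P fun q hq ↦ ?_
  have hq0 : q ∈ oreDegreeLT K x 0 :=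
    mem_oreDegreeLT_of_mul_mem hx hli htop hP ha (by rw [hq]; exact zero_mem _)
  rwa [oreDegreeLT_zero, Submodule.mem_bot] at hq0

end Ring

section DivisionRing

variable [DivisionRing K] [Module K S] [IsScalarTower K S S] {δ : K → K} {x P : S} {a : K} {n : ℕ}

theorem exists_sub_mul_mem_oreDegreeLT (hx : IsConnection δ fun s : S ↦ x * s)
    (htop : ∀ s, ∃ d, s ∈ oreDegreeLT K x d) (hP : HasLeadingTerm x P n a) (ha : a ≠ 0) (s : S) :
    ∃ q, s - q * P ∈ oreDegreeLT K x n := by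
  obtain ⟨d, hd⟩ := htop s
  induction d generalizing s with
  | zero => exact ⟨0, by simpa using oreDegreeLT_mono x n.zero_le hd⟩
  | succ d ih =>
    rcases le_or_gt (d + 1) n with hdn | hnd
    · exact ⟨0, by simpa using oreDegreeLT_mono x hdn hd⟩
    obtain ⟨i, rfl⟩ := Nat.exists_eq_add_of_le' (Nat.le_of_lt_succ hnd)
    obtain ⟨c, hc⟩ := exists_hasLeadingTerm hd
    have hmonomial := (hP.pow_mul hx i).smul (c * a⁻¹)
    rw [inv_mul_cancel_right₀ ha, ← smul_mul_assoc] at hmonomial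
    obtain ⟨q, hq⟩ := ih _ (hc.sub_mem_oreDegreeLT hmonomial)
    exact ⟨(c * a⁻¹) • x ^ i + q, by rwa [add_mul, ← sub_sub]⟩

theorem surjective_mk_oreDegreeLT (hx : IsConnection δ fun s : S ↦ x * s)
    (htop : ∀ s, ∃ d, s ∈ oreDegreeLT K x d) (hP : HasLeadingTerm x P n a) (ha : a ≠ 0) :
    Function.Surjective (((Ideal.span {P}).mkQ.restrictScalars K).domRestrict
      (oreDegreeLT K x n)) := by
  intro v
  obtain ⟨s, rfl⟩ := Submodule.mkQ_surjective _ v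
  obtain ⟨q, hq⟩ := exists_sub_mul_mem_oreDegreeLT hx htop hP ha s
  refine ⟨⟨_, hq⟩, (Submodule.Quotient.eq _).2 ?_⟩
  change s - q * P - s ∈ Ideal.span {P}
  rw [sub_sub_cancel_left]
  exact neg_mem (Ideal.mem_span_singleton'.2 ⟨q, rfl⟩)

theorem finite_quotient_span_singleton (hx : IsConnection δ fun s : S ↦ x * s)
    (htop : ∀ s, ∃ d, s ∈ oreDegreeLT K x d) (hP : HasLeadingTerm x P n a) (ha : a ≠ 0) :
    Module.Finite K (S ⧸ Ideal.span {P}) :=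
  Module.Finite.of_surjective _ (surjective_mk_oreDegreeLT hx htop hP ha)

theorem finrank_quotient_span_singleton_le (hx : IsConnection δ fun s : S ↦ x * s)
    (htop : ∀ s, ∃ d, s ∈ oreDegreeLT K x d) (hP : HasLeadingTerm x P n a) (ha : a ≠ 0) :
    Module.finrank K (S ⧸ Ideal.span {P}) ≤ n :=
  (LinearMap.finrank_le_finrank_of_surjective (surjective_mk_oreDegreeLT hx htop hP ha)).trans
    (finrank_oreDegreeLT_le n x)

end DivisionRing

end OreDegree

section Centralizer

variable {F K S : Type*} [Ring S]

/-- Right multiplication by elements of the centralizer of `P`, as `S`-linear endomorphisms of the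
left module `S / SP`. -/
def rightMulQuotient (F : Type*) [CommRing F] [Algebra F S] (P : S) :
    Subalgebra.centralizer F {P} →ₗ[F] Module.End S (S ⧸ Ideal.span {P}) where
  toFun c := Submodule.mapQ _ _ (LinearMap.toSpanSingleton S S (c : S)) <| by
    rw [Ideal.span, Submodule.span_le, Set.singleton_subset_iff]
    exact Ideal.mem_span_singleton'.2 ⟨c, (Subalgebra.mem_centralizer_iff F).1 c.2 P rfl |>.symm⟩
  map_add' c d := by
    ext
    simp
  map_smul' k c := by
    ext
    simp

theorem exists_mul_eq_of_rightMulQuotient_eq_zero [CommRing F] [Algebra F S] {P : S}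
    (hP : IsRightRegular P) {c : Subalgebra.centralizer F {P}}
    (hc : rightMulQuotient F P c = 0) : ∃ q : Subalgebra.centralizer F {P}, P * q = (c : S) := by
  have hcP : (c : S) ∈ Ideal.span {P} := by
    simpa [rightMulQuotient] using LinearMap.congr_fun hc (Submodule.Quotient.mk 1)
  obtain ⟨q, hq⟩ := Ideal.mem_span_singleton'.1 hcP
  have hPc : P * c = c * P := (Subalgebra.mem_centralizer_iff F).1 c.2 P rfl
  have hPq : P * q = q * P := hP (by simpa [mul_assoc, hq] using hPc)
  refine ⟨⟨q, (Subalgebra.mem_centralizer_iff F).2 ?_⟩, hPq.trans hq⟩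
  rintro _ rfl
  exact hPq

/-- The centralizer of `P` as an `F[X]`-module, where `X` acts as multiplication by `P`. -/
abbrev CentralizerModule (F : Type*) [CommRing F] [Algebra F S] (P : S) : Type _ :=
  Module.AEval F (Subalgebra.centralizer F {P})
    (⟨P, by simp [Subalgebra.mem_centralizer_iff]⟩ : Subalgebra.centralizer F {P})

namespace CentralizerModule

section CommRing

variable [CommRing F] [Algebra F S] {P : S}

/-- The underlying element of `S`. -/
def val : CentralizerModule F P →ₗ[F] S :=
  (Subalgebra.centralizer F {P}).val.toLinearMap ∘ₗ (Module.AEval.of F _ _).symm.toLinearMap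

theorem val_injective : Function.Injective (val : CentralizerModule F P →ₗ[F] S) :=
  Subtype.val_injective.comp (LinearEquiv.injective _)

theorem range_val : Set.range (val : CentralizerModule F P →ₗ[F] S) = centralizerOf P := by
  ext s
  constructor
  · rintro ⟨m, rfl⟩
    exact ((Subalgebra.mem_centralizer_iff F).1 ((Module.AEval.of F _ _).symm m).2 P rfl).symm
  · intro hs
    refine ⟨Module.AEval.of F _ _ ⟨s, (Subalgebra.mem_centralizer_iff F).2 ?_⟩, rfl⟩
    rintro _ rfl
    exact hs.symm

theorem val_smul (f : F[X]) (m : CentralizerModule F P) : val (f • m) = aeval P f * val m := by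
  simp only [val, LinearMap.comp_apply, LinearEquiv.coe_coe, Module.AEval.of_symm_smul,
    smul_eq_mul, AlgHom.toLinearMap_apply, map_mul, ← aeval_algHom_apply]
  rfl

theorem val_X_smul (m : CentralizerModule F P) : val ((X : F[X]) • m) = P * val m := by
  rw [val_smul, aeval_X]

theorem isFreeModuleOfRankAtMost {m N : ℕ} (b : Module.Basis (Fin m) F[X] (CentralizerModule F P))
    (hm : m ≤ N) :
    IsFreeModuleOfRankAtMost (Set.range (aeval (R := F) P)) (centralizerOf P) N := by
  refine ⟨m, hm, fun i ↦ val (b i), fun i ↦ range_val.subset ⟨b i, rfl⟩, ?_⟩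
  rw [← range_val (F := F)]
  have hsum (f : Fin m → F[X]) : ∑ i, aeval P (f i) * val (b i) = val (∑ i, f i • b i) := by
    simp_rw [map_sum, val_smul]
  rintro _ ⟨e, rfl⟩
  refine ⟨fun i ↦ aeval P (b.repr e i), ⟨fun i ↦ ⟨_, rfl⟩, by rw [hsum, b.sum_repr]⟩, ?_⟩
  rintro c ⟨hc, hec⟩
  choose f hf using hc
  obtain rfl : (fun i ↦ aeval P (f i)) = c := funext hf
  have he : e = ∑ i, f i • b i := val_injective (hec.trans (hsum f))
  simp_rw [he, b.repr_sum_self]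

end CommRing

variable [Field F] [Field K] [Algebra F K] [Algebra F S] [Module K S] [IsScalarTower F K S]
  {δ : K → K} {x P : S} {a : K} {n : ℕ}

/-- The filtration of the centralizer of `P` by degree in the variable `x`. -/
def filtration (F K : Type*) [Field F] [Field K] [Algebra F K] [Algebra F S] [Module K S]
    [IsScalarTower F K S] (x P : S) (d : ℕ) : Submodule F (CentralizerModule F P) :=
  ((oreDegreeLT K x d).restrictScalars F).comap val

variable [IsScalarTower K S S]

theorem isDegreeFiltration (hx : IsConnection δ fun s : S ↦ x * s)
    (hli : LinearIndependent K fun i : ℕ ↦ x ^ i) (htop : ∀ s, ∃ d, s ∈ oreDegreeLT K x d)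
    (hP : HasLeadingTerm x P n a) (ha : a ≠ 0) (hn : 0 < n) :
    IsDegreeFiltration (filtration F K x P) where
  monotone _ _ hde _ hm := oreDegreeLT_mono x hde hm
  zero := by
    refine (Submodule.eq_bot_iff _).2 fun m hm ↦ val_injective ?_
    rw [map_zero, ← Submodule.mem_bot K, ← oreDegreeLT_zero x]
    exact hm
  exists_mem m := htop (val m)
  mem_of_X_smul_mem {d m} hm := by
    have hcomm : val m * P = P * val m := range_val.subset ⟨m, rfl⟩
    have hPm : P * val m ∈ oreDegreeLT K x (d + 1) := by
      rw [← val_X_smul]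
      exact hm
    exact mem_oreDegreeLT_of_mul_mem hx hli htop hP ha
      (hcomm ▸ oreDegreeLT_mono x (Nat.add_le_add_left hn d) hPm)

theorem exists_basis (hδ : ∀ k, δ k = 0 ↔ k ∈ Set.range (algebraMap F K))
    (hx : IsConnection δ fun s : S ↦ x * s) (hli : LinearIndependent K fun i : ℕ ↦ x ^ i)
    (htop : ∀ s, ∃ d, s ∈ oreDegreeLT K x d) (hP : HasLeadingTerm x P n a) (ha : a ≠ 0)
    (hn : 0 < n) :
    ∃ m ≤ n ^ 2, Nonempty (Module.Basis (Fin m) F[X] (CentralizerModule F P)) := by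
  have := finite_quotient_span_singleton hx htop hP ha
  have hxV : IsConnection δ fun v : S ⧸ Ideal.span {P} ↦ x • v := hx.smul
  have := hxV.finite_end hδ
  let ψ : CentralizerModule F P →ₗ[F] Module.End S (S ⧸ Ideal.span {P}) :=
    rightMulQuotient F P ∘ₗ (Module.AEval.of F _ _).symm.toLinearMap
  have hψ (m : CentralizerModule F P) (hm : ψ m = 0) : ∃ q, (X : F[X]) • q = m := by
    obtain ⟨q, hq⟩ := exists_mul_eq_of_rightMulQuotient_eq_zero
      (isRightRegular_of_hasLeadingTerm hx hli htop hP ha) hm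
    exact ⟨Module.AEval.of F _ _ q, val_injective ((val_X_smul _).trans hq)⟩
  obtain ⟨m, hm, hb⟩ := (isDegreeFiltration hx hli htop hP ha hn).exists_basis hψ
  have hrank := Nat.pow_le_pow_left (finrank_quotient_span_singleton_le hx htop hP ha) 2
  exact ⟨m, hm.trans ((hxV.finrank_end_le hδ).trans hrank), hb⟩

end CentralizerModule

end Centralizer

namespace IsOreExtension

section Module

variable {K S : Type*} [Ring K] [Ring S] [Module K S] {ι : K →+* S} {σ : K →+* K} {δ : K → K}
  {x : S}

theorem linearCombination_oreCoeff (h : IsOreExtension ι σ δ x) (hι : ∀ k (s : S), k • s = ι k * s)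
    (s : S) : Finsupp.linearCombination K (fun i ↦ x ^ i) (oreCoeff h s) = s := by
  simp_rw [Finsupp.linearCombination_apply, hι]
  exact (h.repr_uniq s).exists.choose_spec.symm

theorem linearIndependent_pow (h : IsOreExtension ι σ δ x) (hι : ∀ k (s : S), k • s = ι k * s) :
    LinearIndependent K fun i : ℕ ↦ x ^ i := by
  intro c d hcd
  simp_rw [Finsupp.linearCombination_apply, hι] at hcd
  exact (h.repr_uniq _).unique rfl hcd

theorem hasLeadingTerm (h : IsOreExtension ι σ δ x) (hι : ∀ k (s : S), k • s = ι k * s) (s : S) :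
    HasLeadingTerm x s (oreDeg h s) (oreLeadCoeff h s) := by
  refine (Finsupp.mem_span_image_iff_linearCombination K).2
    ⟨(oreCoeff h s).erase (oreDeg h s), ?_, ?_⟩
  · intro i hi
    rw [Finset.mem_coe, Finsupp.support_erase, Finset.mem_erase] at hi
    exact lt_of_le_of_ne (Finset.le_sup (f := id) hi.2) hi.1
  · rw [Finsupp.erase_eq_sub_single, map_sub, h.linearCombination_oreCoeff hι,
      Finsupp.linearCombination_single, oreLeadCoeff]

theorem exists_mem_oreDegreeLT (h : IsOreExtension ι σ δ x) (hι : ∀ k (s : S), k • s = ι k * s)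
    (s : S) : ∃ d, s ∈ oreDegreeLT K x d :=
  ⟨_, (h.hasLeadingTerm hι s).mem_oreDegreeLT_succ⟩

theorem isConnection (h : IsOreExtension ι (RingHom.id K) δ x)
    (hι : ∀ k (s : S), k • s = ι k * s) : IsConnection δ fun s : S ↦ x * s := by
  intro k s
  simp only [hι]
  rw [← mul_assoc, h.comm_rule, RingHom.id_apply, add_mul, mul_assoc]

end Module

/-- The derivation of the coefficient ring underlying a differential operator ring. -/
def derivation {R S : Type*} [CommRing R] [Ring S] {ι : R →+* S} {δ : R → R} {x : S}
    (h : IsOreExtension ι (RingHom.id R) δ x) : Derivation ℤ R R :=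
  Derivation.mk' (AddMonoidHom.mk' δ h.deriv_add).toIntLinearMap fun a b ↦
    (h.deriv_mul a b).trans (by simp [mul_comm b])

section Field

variable {K S : Type*} [Field K] [Ring S] {ι : K →+* S} {δ : K → K} {x : S}

/-- The subfield of constants of the derivation of a differential operator ring. -/
def constants (h : IsOreExtension ι (RingHom.id K) δ x) : Subfield K where
  carrier := {a | δ a = 0}
  mul_mem' {a b} ha hb := by
    change h.derivation a = 0 at ha
    change h.derivation b = 0 at hb
    change h.derivation (a * b) = 0
    rw [Derivation.leibniz, ha, hb, smul_zero, smul_zero, add_zero]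
  one_mem' := h.derivation.map_one_eq_zero
  add_mem' {a b} ha hb := (h.deriv_add a b).trans (by rw [ha, hb, add_zero])
  zero_mem' := map_zero h.derivation
  neg_mem' {a} ha := (map_neg h.derivation a).trans (neg_eq_zero.2 ha)
  inv_mem' a ha := by
    change h.derivation a = 0 at ha
    change h.derivation a⁻¹ = 0
    rw [Derivation.leibniz_inv, ha, smul_zero]

theorem commute_of_deriv_eq_zero (h : IsOreExtension ι (RingHom.id K) δ x) {a : K} (ha : δ a = 0)
    (s : S) : Commute (ι a) s := by
  obtain ⟨c, rfl⟩ := (h.repr_uniq s).exists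
  have hx : Commute (ι a) x := (by simpa [ha] using h.comm_rule a : x * ι a = ι a * x).symm
  exact Commute.sum_right _ _ _ fun i _ ↦ ((Commute.all a (c i)).map ι).mul_right (hx.pow_right i)

/-- The algebra structure over the constants, which exists because constants are central. It extends
the action by restriction from `K`. -/
abbrev constantsAlgebra [Module K S] [IsScalarTower K S S]
    (h : IsOreExtension ι (RingHom.id K) δ x) (hι : ∀ k (s : S), k • s = ι k * s) :
    Algebra h.constants S :=
  Algebra.ofModule (fun a ↦ smul_mul_assoc (a : K)) fun a s t ↦ by
    change s * (a : K) • t = (a : K) • (s * t)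
    rw [hι, hι, ← mul_assoc, ← mul_assoc, (h.commute_of_deriv_eq_zero a.2 s).eq]

end Field

end IsOreExtension

theorem polysIn_eq_range_aeval {K S : Type*} [Field K] [Ring S] {ι : K →+* S} {F : Subfield K}
    [Algebra F S] (hF : ∀ a : F, algebraMap F S a = ι a) (P : S) :
    polysIn ι F P = Set.range (aeval (R := F) P) := by
  ext s
  constructor
  · rintro ⟨d, hd, rfl⟩
    refine ⟨∑ j ∈ d.support, monomial j ⟨d j, hd j⟩, ?_⟩
    simp_rw [map_sum, aeval_monomial, hF]
    rfl
  · rintro ⟨f, rfl⟩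
    refine ⟨.onFinset f.support (fun j ↦ f.coeff j) fun j hj ↦ ?_, fun j ↦ (f.coeff j).2, ?_⟩
    · exact mem_support_iff.2 fun hfj ↦ hj (by rw [hfj, ZeroMemClass.coe_zero])
    · rw [aeval_def, eval₂_eq_sum, Finsupp.onFinset_sum _ fun j ↦ by rw [map_zero, zero_mul]]
      simp_rw [← hF]
      rfl

/-- **Goodearl, Theorem 1.11.** Let `𝕜` be a field with a derivation `δ` and
`F` its subfield of constants. If `P ∈ S = 𝕜[x; id, δ]` has positive degree `n` and
invertible leading coefficient, then `C_S(P)` is a free `F[P]`-module of rank at most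
`n²`. -/
theorem goodearl_centralizer_free_sq {K : Type*} [Field K] [Ring S]
    (ι : K →+* S) (δ : K → K) (x : S) (h : IsOreExtension ι (RingHom.id K) δ x)
    (P : S) (n : ℕ) (hn : 0 < n) (hdeg : oreDeg h P = n)
    (hlc : IsUnit (oreLeadCoeff h P)) :
    IsFreeModuleOfRankAtMost (polysIn ι {a : K | δ a = 0} P) (centralizerOf P) (n ^ 2) := by
  let : Module K S := Module.compHom S ι
  have hι (k : K) (s : S) : k • s = ι k * s := rfl
  have : IsScalarTower K S S := ⟨fun k s t ↦ mul_assoc (ι k) s t⟩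
  let : Algebra h.constants S := h.constantsAlgebra hι
  have hδ (k : K) : δ k = 0 ↔ k ∈ Set.range (algebraMap h.constants K) :=
    Subtype.range_val.symm ▸ Iff.rfl
  have hpoly : polysIn ι {a | δ a = 0} P = Set.range (aeval (R := h.constants) P) :=
    polysIn_eq_range_aeval (F := h.constants) (fun a ↦ mul_one (ι a)) P
  obtain ⟨m, hm, ⟨b⟩⟩ := CentralizerModule.exists_basis hδ (h.isConnection hι)
    (h.linearIndependent_pow hι) (h.exists_mem_oreDegreeLT hι) (hdeg ▸ h.hasLeadingTerm hι P)
    hlc.ne_zero hn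
  exact hpoly ▸ CentralizerModule.isFreeModuleOfRankAtMost b hm
end
end

section
/- Let R be a commutative ring with a derivation δ such that the ring of constants is a field F of characteristic zero. Assume that for every a ∈ R, if the set {b ∈ R : δ(b) = ab} contains a nonzero element, then it contains an invertible element. Let P be an element of S = R[x; id_R, δ] of positive degree n with invertible leading coefficient. Then C_S(P) is a free F[P]-module of rank at most n; consequently, if Q ∈ S commutes with P, then there exists a nonzero polynomial f(s,t) ∈ F[s,t] such that f(P,Q) = 0. -/
open Finsupp

noncomputable section

variable {R S : Type*}

/-!
Identify `S` additively with `R[X]` by taking left coefficients. The product of `s` and `t` then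
becomes `∑ k, D_k s * δ^k t`, where `D_k` is the `k`-th Hasse derivative and `δ` acts on
coefficients. Comparing coefficients in degree `n + m - 1`, commuting elements of degrees `n`, `m`
with leading coefficients `p`, `q` satisfy `n * p * δ q = m * q * δ p`. So if `n * p` is invertible,
the leading coefficients of the elements of degree `m` commuting with `P` all solve one equation
`δ b = a * b`, whose solutions form an at most one-dimensional space over the constants `F`.

Thus the degree filters `C(P)` with graded pieces of dimension at most one, and multiplication by
`P` shifts it by `n`. Choosing one element for each attained degree `d` such that `d - n` is not
attained gives a basis of `C(P)` over `F[P]`; these degrees are distinct modulo `n`. As a finite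
module `C(P)` is integral over `F[P]`, which yields the polynomial relations.
-/

section DegreeFunction

open Polynomial

/-- A degree on a `K[X]`-module, with value `⊥` exactly at `0`, which `X` raises by `n` and whose
graded pieces are at most one-dimensional over `K`: two elements of equal degree agree up to a
scalar and terms of lower degree. -/
structure IsDegreeFunction (K : Type*) {V : Type*} [Field K] [AddCommGroup V] [Module K[X] V]
    (n : ℕ) (deg : V → WithBot ℕ) : Prop where
  isNonarchimedean : IsNonarchimedean deg
  eq_bot_iff : ∀ v, deg v = ⊥ ↔ v = 0
  C_smul : ∀ c : K, c ≠ 0 → ∀ v, deg ((C c : K[X]) • v) = deg v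
  X_smul : ∀ v, deg ((X : K[X]) • v) = n + deg v
  exists_sub_lt : ∀ v w, v ≠ 0 → deg v = deg w → ∃ c : K, deg (v - (C c : K[X]) • w) < deg v

/-- The attained degrees that are not `n` plus an attained degree. Choosing one element in each of
these degrees gives a basis of the `K[X]`-module. -/
def generatorDegrees {V : Type*} (n : ℕ) (deg : V → WithBot ℕ) : Set ℕ :=
  {d | (∃ v, deg v = d) ∧ ∀ v, n + deg v ≠ d}

namespace IsDegreeFunction

variable {K V : Type*} [Field K] [AddCommGroup V] [Module K[X] V] {n : ℕ} {deg : V → WithBot ℕ}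

lemma map_neg (h : IsDegreeFunction K n deg) (v : V) : deg (-v) = deg v := by
  simpa using h.C_smul (-1) (neg_ne_zero.mpr one_ne_zero) v

lemma map_X_pow_smul (h : IsDegreeFunction K n deg) (k : ℕ) (v : V) :
    deg ((X : K[X]) ^ k • v) = (n * k : ℕ) + deg v := by
  induction k with
  | zero => simp
  | succ k ih =>
    rw [pow_succ', mul_smul, h.X_smul, ih, ← add_assoc, ← Nat.cast_add, Nat.mul_succ,
      add_comm n]

lemma map_smul (h : IsDegreeFunction K n deg) (hn : 0 < n) {f : K[X]} (hf : f ≠ 0) (v : V) :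
    deg (f • v) = (n * f.natDegree : ℕ) + deg v := by
  rcases eq_or_ne v 0 with rfl | hv
  · rw [smul_zero, (h.eq_bot_iff 0).mpr rfl, WithBot.add_bot]
  have deg_term : ∀ i ∈ f.support, deg ((C (f.coeff i) * X ^ i) • v) = (n * i : ℕ) + deg v :=
    fun i hi => by
      rw [mul_smul, h.C_smul _ (Polynomial.mem_support_iff.mp hi), h.map_X_pow_smul]
  have hlead : f.natDegree ∈ f.support := natDegree_mem_support_of_nonzero hf
  conv_lhs => rw [f.as_sum_support_C_mul_X_pow, Finset.sum_smul]
  rw [h.isNonarchimedean.apply_sum_eq_of_lt (fun w => (h.map_neg w).symm) hlead, deg_term _ hlead]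
  intro i hi hne
  rw [deg_term i hi, deg_term _ hlead]
  have hlt : n * i < n * f.natDegree :=
    Nat.mul_lt_mul_of_pos_left ((le_natDegree_of_mem_supp i hi).lt_of_ne hne) hn
  exact WithBot.add_lt_add_right (mt (h.eq_bot_iff v).mp hv) (Nat.cast_lt.mpr hlt)

lemma injOn_mod_generatorDegrees (h : IsDegreeFunction K n deg) :
    Set.InjOn (· % n) (generatorDegrees n deg) := by
  have not_lt_of_mod_eq : ∀ d ∈ generatorDegrees n deg, ∀ e ∈ generatorDegrees n deg,
      d % n = e % n → ¬ d < e := by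
    rintro d ⟨⟨v, hv⟩, -⟩ e ⟨-, he⟩ hmod hlt
    obtain ⟨k, hk⟩ := (Nat.modEq_iff_dvd' hlt.le).mp hmod
    obtain ⟨j, rfl⟩ : ∃ j, k = j + 1 := Nat.exists_eq_succ_of_ne_zero (by rintro rfl; omega)
    refine he ((X : K[X]) ^ j • v) ?_
    rw [h.map_X_pow_smul, hv, ← Nat.cast_add, ← Nat.cast_add, Nat.cast_inj]
    grind
  intro d hd e he hmod
  exact le_antisymm (not_lt.mp (not_lt_of_mod_eq e he d hd hmod.symm))
    (not_lt.mp (not_lt_of_mod_eq d hd e he hmod))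

lemma finite_generatorDegrees (h : IsDegreeFunction K n deg) (hn : 0 < n) :
    (generatorDegrees n deg).Finite :=
  Set.Finite.of_injOn (fun d _ => Set.mem_Iio.mpr (Nat.mod_lt d hn))
    h.injOn_mod_generatorDegrees (Set.finite_Iio n)

lemma ncard_generatorDegrees_le (h : IsDegreeFunction K n deg) (hn : 0 < n) :
    (generatorDegrees n deg).ncard ≤ n := by
  simpa using Set.ncard_le_ncard_of_injOn (t := Set.Iio n) (· % n)
    (fun d _ => Set.mem_Iio.mpr (Nat.mod_lt d hn)) h.injOn_mod_generatorDegrees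

variable {u : generatorDegrees n deg → V}

lemma linearIndependent_of_deg_eq (h : IsDegreeFunction K n deg) (hn : 0 < n)
    (hu : ∀ d, deg (u d) = (d : ℕ)) : LinearIndependent K[X] u := by
  rw [linearIndependent_iff]
  intro l hl
  rw [Finsupp.linearCombination_apply, Finsupp.sum] at hl
  by_contra hne
  have deg_term : ∀ d ∈ l.support, deg (l d • u d) = (n * (l d).natDegree + d : ℕ) :=
    fun d hd => by rw [h.map_smul hn (Finsupp.mem_support_iff.mp hd), hu, Nat.cast_add]
  obtain ⟨d, hd, hmax⟩ := l.support.exists_max_image (fun d => n * (l d).natDegree + (d : ℕ))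
    (Finsupp.support_nonempty_iff.mpr hne)
  have deg_sum : deg (∑ e ∈ l.support, l e • u e) = deg (l d • u d) := by
    refine h.isNonarchimedean.apply_sum_eq_of_lt (fun w => (h.map_neg w).symm) hd fun e he hed => ?_
    rw [deg_term e he, deg_term d hd, Nat.cast_lt]
    refine (hmax e he).lt_of_ne fun heq => hed (Subtype.ext ?_)
    exact h.injOn_mod_generatorDegrees e.2 d.2 (by simpa using congrArg (· % n) heq)
  rw [hl, (h.eq_bot_iff 0).mpr rfl, deg_term d hd] at deg_sum
  exact WithBot.bot_ne_coe deg_sum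

lemma span_range_eq_top_of_deg_eq (h : IsDegreeFunction K n deg) (hn : 0 < n)
    (hu : ∀ d, deg (u d) = (d : ℕ)) : Submodule.span K[X] (Set.range u) = ⊤ := by
  refine Submodule.eq_top_iff'.mpr fun v => ?_
  induction hd : deg v using WellFoundedLT.induction generalizing v with
  | ind d ih =>
    subst hd
    rcases eq_or_ne v 0 with rfl | hv
    · exact zero_mem _
    obtain ⟨d, hd⟩ := WithBot.ne_bot_iff_exists.mp (mt (h.eq_bot_iff v).mp hv)
    obtain ⟨w, hw, hdw⟩ : ∃ w ∈ Submodule.span K[X] (Set.range u), deg v = deg w := by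
      by_cases hgen : d ∈ generatorDegrees n deg
      · exact ⟨u ⟨d, hgen⟩, Submodule.subset_span ⟨_, rfl⟩, by rw [hu, ← hd]; rfl⟩
      · obtain ⟨w, hw⟩ : ∃ w, n + deg w = deg v := by
          by_contra! hall
          exact hgen ⟨⟨v, hd.symm⟩, fun w hw => hall w (hw.trans hd)⟩
        have hlt : deg w < deg v := by
          obtain ⟨e, he⟩ := WithBot.ne_bot_iff_exists.mp fun hbot : deg w = ⊥ => by
            rw [hbot, WithBot.add_bot, ← hd] at hw
            exact WithBot.bot_ne_coe hw
          rw [← hw, ← he]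
          exact WithBot.coe_lt_coe.mpr (Nat.lt_add_of_pos_left hn)
        exact ⟨(X : K[X]) • w, Submodule.smul_mem _ _ (ih _ hlt w rfl), by rw [h.X_smul, hw]⟩
    obtain ⟨c, hc⟩ := h.exists_sub_lt v w hv hdw
    simpa using add_mem (ih _ hc _ rfl) (Submodule.smul_mem _ (C c) hw)

theorem exists_basis (h : IsDegreeFunction K n deg) (hn : 0 < n) :
    ∃ m ≤ n, Nonempty (Module.Basis (Fin m) K[X] V) := by
  choose u hu using fun d : generatorDegrees n deg => d.2.1
  have : Finite (generatorDegrees n deg) := (h.finite_generatorDegrees hn)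
  refine ⟨_, h.ncard_generatorDegrees_le hn, ⟨?_⟩⟩
  exact (Module.Basis.mk (h.linearIndependent_of_deg_eq hn hu)
    (h.span_range_eq_top_of_deg_eq hn hu).ge).reindex (Finite.equivFin _)

end IsDegreeFunction
end DegreeFunction

section MapCoeffs

open Polynomial Differential

variable [CommRing R] [Differential R]

lemma natDegree_mapCoeffs_le (g : R[X]) : (mapCoeffs g).natDegree ≤ g.natDegree :=
  natDegree_le_iff_coeff_eq_zero.mpr fun N hN => by
    rw [coeff_mapCoeffs, coeff_eq_zero_of_natDegree_lt hN, map_zero]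

lemma natDegree_iterate_mapCoeffs_le (k : ℕ) (g : R[X]) :
    (mapCoeffs^[k] g).natDegree ≤ g.natDegree := by
  induction k with
  | zero => rfl
  | succ k ih =>
    rw [Function.iterate_succ_apply']
    exact (natDegree_mapCoeffs_le _).trans ih

lemma coeff_derivative_mul_mapCoeffs {f g : R[X]} {N : ℕ}
    (hN : f.natDegree + g.natDegree = N + 1) :
    (derivative f * mapCoeffs g).coeff N = f.natDegree * f.leadingCoeff * g.leadingCoeff′ := by
  have coeff_euler (i : ℕ) : (X * derivative f).coeff i = i * f.coeff i := by
    cases i <;> simp [coeff_derivative, mul_comm]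
  have natDegree_euler : (X * derivative f).natDegree ≤ f.natDegree :=
    natDegree_le_iff_coeff_eq_zero.mpr fun i hi => by
      rw [coeff_euler, coeff_eq_zero_of_natDegree_lt hi, mul_zero]
  rw [← coeff_X_mul, ← mul_assoc, ← hN, coeff_mul_add_eq_of_natDegree_le natDegree_euler
    (natDegree_mapCoeffs_le g), coeff_euler, coeff_mapCoeffs,
    leadingCoeff, leadingCoeff]

end MapCoeffs

section OrePolynomials

open Polynomial

namespace IsOreExtension

section Ring

variable [Ring R] [Ring S] {ι : R →+* S} {σ : R →+* R} {δ : R → R} {x : S}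

lemma eval₂_bijective (h : IsOreExtension ι σ δ x) :
    Function.Bijective (eval₂AddMonoidHom ι x) := by
  refine (Function.bijective_iff_existsUnique _).mpr fun s => ?_
  obtain ⟨c, hc, hc_unique⟩ := h.repr_uniq s
  refine ⟨⟨⟨c⟩⟩, ?_, ?_⟩
  · rw [hc]
    exact eval₂_eq_sum
  · rintro ⟨⟨d⟩⟩ hd
    rw [hc_unique d (hd.symm.trans eval₂_eq_sum)]

/-- The symbol of `s`: the ordinary polynomial with the same left coefficients as `s`, i.e. the
inverse of evaluation at `x`. It is additive and `R`-linear, but not multiplicative. -/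
def symbol (h : IsOreExtension ι σ δ x) : S ≃+ R[X] :=
  (AddEquiv.ofBijective (eval₂AddMonoidHom ι x) h.eval₂_bijective).symm

variable (h : IsOreExtension ι σ δ x)

lemma symbol_eval₂ (f : R[X]) : h.symbol (f.eval₂ ι x) = f :=
  (AddEquiv.ofBijective (eval₂AddMonoidHom ι x) h.eval₂_bijective).symm_apply_apply f

lemma eval₂_symbol (s : S) : (h.symbol s).eval₂ ι x = s :=
  h.symbol.symm_apply_apply s

lemma symbol_map_mul (r : R) (s : S) : h.symbol (ι r * s) = C r * h.symbol s := by
  conv_lhs => rw [← h.eval₂_symbol s, ← eval₂_smul, h.symbol_eval₂, smul_eq_C_mul]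

lemma toFinsupp_symbol (s : S) : (h.symbol s).toFinsupp.coeff = oreCoeff h s :=
  (h.repr_uniq s).unique ((h.eval₂_symbol s).symm.trans eval₂_eq_sum)
    (h.repr_uniq s).exists.choose_spec

lemma natDegree_symbol (s : S) : (h.symbol s).natDegree = oreDeg h s := by
  rw [← supDegree_eq_natDegree, oreDeg, ← h.toFinsupp_symbol, AddMonoidAlgebra.supDegree]

lemma leadingCoeff_symbol (s : S) : (h.symbol s).leadingCoeff = oreLeadCoeff h s := by
  rw [oreLeadCoeff, ← h.toFinsupp_symbol, toFinsupp_apply, ← h.natDegree_symbol, leadingCoeff]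

end Ring

section CommRing

variable [CommRing R] [Ring S] {ι : R →+* S} {δ : R → R} {x : S}

lemma commute_map_of_deriv_eq_zero (h : IsOreExtension ι (RingHom.id R) δ x) {a : R}
    (ha : δ a = 0) (s : S) : Commute (ι a) s := by
  have commute_x : Commute (ι a) x := by
    rw [commute_iff_eq, h.comm_rule, ha, map_zero, add_zero, RingHom.id_apply]
  rw [← h.eval₂_symbol s, eval₂_eq_sum]
  exact Commute.sum_right _ _ _ fun i _ =>
    ((Commute.all a _).map ι).mul_right (commute_x.pow_right i)

/-- The base ring of a differential operator ring, with `δ` as its derivation. -/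
abbrev toDifferential (h : IsOreExtension ι (RingHom.id R) δ x) : Differential R where
  deriv := Derivation.mk' (AddMonoidHom.mk' δ h.deriv_add).toIntLinearMap fun a b => by
    change δ (a * b) = a * δ b + b * δ a
    rw [h.deriv_mul, RingHom.id_apply, mul_comm (δ a)]

end CommRing

section Differential

open Differential

variable [CommRing R] [Differential R] [Ring S] {ι : R →+* S} {x : S}
  (h : IsOreExtension ι (RingHom.id R) (Differential.deriv : R → R) x)

lemma symbol_x_mul (s : S) : h.symbol (x * s) = X * h.symbol s + mapCoeffs (h.symbol s) := by
  obtain ⟨f, rfl⟩ := h.symbol.symm.surjective s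
  rw [AddEquiv.apply_symm_apply]
  change h.symbol (x * f.eval₂ ι x) = _
  induction f using Polynomial.induction_on' with
  | add f g hf hg => rw [eval₂_add, mul_add, map_add, hf, hg, map_add, mul_add]; abel
  | monomial i r =>
    have x_mul_eval₂_monomial : x * (monomial i r).eval₂ ι x =
        (monomial (i + 1) r + monomial i r′).eval₂ ι x := by
      rw [eval₂_add, eval₂_monomial, eval₂_monomial, eval₂_monomial, ← mul_assoc, h.comm_rule,
        add_mul, mul_assoc, ← pow_succ', RingHom.id_apply]
    rw [x_mul_eval₂_monomial, h.symbol_eval₂, X_mul_monomial, mapCoeffs_monomial]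

lemma symbol_x_pow_mul (i : ℕ) (s : S) : h.symbol (x ^ i * s) =
    ∑ k ∈ Finset.range (i + 1), i.choose k • (X ^ (i - k) * mapCoeffs^[k] (h.symbol s)) := by
  let mulX : Module.End ℤ R[X] := LinearMap.mulLeft ℤ X
  let D : Module.End ℤ R[X] := (mapCoeffs : Derivation ℤ R[X] R[X])
  have symbol_eq_pow : h.symbol (x ^ i * s) = ((D + mulX) ^ i) (h.symbol s) := by
    induction i with
    | zero => simp
    | succ i ih =>
      rw [pow_succ', mul_assoc, h.symbol_x_mul, ih, pow_succ', add_comm]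
      rfl
  have hcomm : Commute D mulX := LinearMap.ext fun f => by simp [D, mulX]
  have hmulX (j : ℕ) (g : R[X]) : (mulX ^ j) g = X ^ j * g := by
    simp [mulX, LinearMap.pow_mulLeft]
  have hD (k : ℕ) (g : R[X]) : (D ^ k) g = mapCoeffs^[k] g := Module.End.pow_apply D k g
  -- `x ^ i` acts as `(D + X) ^ i`, and `D` commutes with multiplication by `X`.
  rw [symbol_eq_pow, hcomm.add_pow, LinearMap.sum_apply]
  refine Finset.sum_congr rfl fun k _ => ?_
  rw [← nsmul_eq_mul', LinearMap.smul_apply, (hcomm.pow_pow k _).eq, Module.End.mul_apply, hmulX,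
    hD]

lemma symbol_mul {N : ℕ} {s : S} (hs : (h.symbol s).natDegree ≤ N) (t : S) :
    h.symbol (s * t) = ∑ k ∈ Finset.range (N + 1),
      hasseDeriv k (h.symbol s) * mapCoeffs^[k] (h.symbol t) := by
  conv_lhs => rw [← h.eval₂_symbol s]
  refine induction_with_natDegree_le (fun f => h.symbol (f.eval₂ ι x * t) =
    ∑ k ∈ Finset.range (N + 1), hasseDeriv k f * mapCoeffs^[k] (h.symbol t)) N ?_ ?_ ?_ _ hs
  · simp
  · intro n r _ hn
    rw [C_mul_X_pow_eq_monomial, eval₂_monomial, mul_assoc, h.symbol_map_mul, h.symbol_x_pow_mul,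
      Finset.mul_sum]
    have hterm (k : ℕ) : C r * n.choose k • (X ^ (n - k) * mapCoeffs^[k] (h.symbol t)) =
        hasseDeriv k (monomial n r) * mapCoeffs^[k] (h.symbol t) := by
      rw [hasseDeriv_monomial, ← C_mul_X_pow_eq_monomial, C_mul, C_eq_natCast, nsmul_eq_mul]
      ring
    simp only [hterm]
    refine Finset.sum_subset (Finset.range_subset_range.mpr (by omega)) fun k _ hk => ?_
    rw [Finset.mem_range, not_lt] at hk
    rw [hasseDeriv_monomial, Nat.choose_eq_zero_of_lt hk, Nat.cast_zero, zero_mul, map_zero,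
      zero_mul]
  · intro f g _ _ hf hg
    simp only [eval₂_add, add_mul, map_add, hf, hg, Finset.sum_add_distrib]

lemma coeff_symbol_mul {n m N : ℕ} (hN : n + m ≤ N + 1) {s t : S}
    (hs : (h.symbol s).natDegree ≤ n) (ht : (h.symbol t).natDegree ≤ m) :
    (h.symbol (s * t)).coeff N = (h.symbol s * h.symbol t +
      derivative (h.symbol s) * mapCoeffs (h.symbol t)).coeff N := by
  have coeff_term_eq_zero (k : ℕ) :
      (hasseDeriv (k + 2) (h.symbol s) * mapCoeffs^[k + 2] (h.symbol t)).coeff N = 0 := by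
    rcases lt_or_ge (h.symbol s).natDegree (k + 2) with hlt | hge
    · rw [hasseDeriv_eq_zero_of_lt_natDegree _ _ hlt, zero_mul, coeff_zero]
    · refine coeff_eq_zero_of_natDegree_lt (natDegree_mul_le.trans_lt ?_)
      have := natDegree_hasseDeriv_le (h.symbol s) (k + 2)
      have := natDegree_iterate_mapCoeffs_le (k + 2) (h.symbol t)
      omega
  rw [h.symbol_mul (hs.trans (Nat.le_succ n)), Finset.sum_range_succ', Finset.sum_range_succ',
    add_assoc, coeff_add, finsetSum_coeff, Finset.sum_eq_zero fun k _ => coeff_term_eq_zero k,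
    zero_add, hasseDeriv_zero', zero_add, hasseDeriv_one', Function.iterate_zero_apply,
    Function.iterate_one, add_comm]

lemma coeff_symbol_mul_of_add_le {n m N : ℕ} (hN : n + m ≤ N) {s t : S}
    (hs : (h.symbol s).natDegree ≤ n) (ht : (h.symbol t).natDegree ≤ m) :
    (h.symbol (s * t)).coeff N = (h.symbol s * h.symbol t).coeff N := by
  rw [h.coeff_symbol_mul (hN.trans N.le_succ) hs ht, coeff_add, add_eq_left]
  rcases Nat.eq_zero_or_pos (h.symbol s).natDegree with h0 | hpos
  · rw [derivative_of_natDegree_zero h0, zero_mul, coeff_zero]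
  · refine coeff_eq_zero_of_natDegree_lt (natDegree_mul_le.trans_lt ?_)
    have := natDegree_derivative_le (h.symbol s)
    have := natDegree_mapCoeffs_le (h.symbol t)
    omega

lemma degree_symbol_mul {s : S} (hs : IsUnit (h.symbol s).leadingCoeff) (t : S) :
    (h.symbol (s * t)).degree = (h.symbol s).degree + (h.symbol t).degree := by
  rcases eq_or_ne (h.symbol t) 0 with ht | ht
  · simp [(map_eq_zero_iff h.symbol h.symbol.injective).mp ht]
  have hlead : (h.symbol s).leadingCoeff * (h.symbol t).leadingCoeff ≠ 0 :=
    hs.mul_right_eq_zero.not.mpr (leadingCoeff_ne_zero.mpr ht)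
  rw [← degree_mul' hlead]
  have coeff_eq {N : ℕ} (hN : (h.symbol s * h.symbol t).natDegree ≤ N) :
      (h.symbol (s * t)).coeff N = (h.symbol s * h.symbol t).coeff N :=
    h.coeff_symbol_mul_of_add_le (natDegree_mul' hlead ▸ hN) le_rfl le_rfl
  have mul_ne_zero : h.symbol s * h.symbol t ≠ 0 :=
    fun h0 => hlead (by rw [← leadingCoeff_mul' hlead, h0, leadingCoeff_zero])
  rw [degree_eq_natDegree mul_ne_zero]
  refine degree_eq_of_le_of_coeff_ne_zero ?_ ?_
  · refine natDegree_le_iff_degree_le.mp (natDegree_le_iff_coeff_eq_zero.mpr fun N hN => ?_)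
    rw [coeff_eq hN.le, coeff_eq_zero_of_natDegree_lt hN]
  · rw [coeff_eq le_rfl]
    exact leadingCoeff_ne_zero.mpr mul_ne_zero

lemma natDegree_mul_leadingCoeff_mul_deriv_of_commute {s t : S} (hst : Commute s t) :
    (h.symbol s).natDegree * (h.symbol s).leadingCoeff * (h.symbol t).leadingCoeff′ =
      (h.symbol t).natDegree * (h.symbol t).leadingCoeff * (h.symbol s).leadingCoeff′ := by
  rcases Nat.eq_zero_or_pos ((h.symbol s).natDegree + (h.symbol t).natDegree) with h0 | hpos
  · simp [Nat.eq_zero_of_add_eq_zero h0]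
  obtain ⟨N, hN⟩ := Nat.exists_eq_succ_of_ne_zero hpos.ne'
  rw [← coeff_derivative_mul_mapCoeffs hN,
    ← coeff_derivative_mul_mapCoeffs ((add_comm _ _).trans hN)]
  have hcoeff : (h.symbol (s * t)).coeff N = (h.symbol (t * s)).coeff N := by rw [hst.eq]
  rw [h.coeff_symbol_mul hN.le le_rfl le_rfl,
    h.coeff_symbol_mul ((add_comm _ _).trans hN).le le_rfl le_rfl, mul_comm (h.symbol t)] at hcoeff
  simpa only [coeff_add, add_right_inj] using hcoeff

end Differential

end IsOreExtension
end OrePolynomials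

section Constants

open Differential

/-- The constants of a differential ring. -/
def constants (R : Type*) [CommRing R] [Differential R] : Subring R where
  carrier := {a | a′ = 0}
  zero_mem' := map_zero _
  one_mem' := Derivation.map_one_eq_zero _
  add_mem' ha hb := by simp_all
  neg_mem' ha := by simp_all
  mul_mem' ha hb := by simp_all

instance [CommRing R] [Differential R] : Differential.ContainConstants (constants R) R where
  mem_range_of_deriv_eq_zero ha := ⟨⟨_, ha⟩, rfl⟩

lemma isField_constants [CommRing R] [Differential R] (hF : IsFieldSubset {a : R | a′ = 0}) :
    IsField (constants R) where
  exists_pair_ne := ⟨0, 1, Subtype.coe_ne_coe.mp hF.1⟩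
  mul_comm := mul_comm
  mul_inv_cancel {a} ha := by
    obtain ⟨b, hb, hab⟩ := hF.2 a a.2 (Subtype.coe_ne_coe.mpr ha)
    exact ⟨⟨b, hb⟩, Subtype.ext hab⟩

variable {K : Type*} [Field K] [CommRing R] [Differential R] [Algebra K R]
  [Differential.ContainConstants K R]

lemma exists_algebraMap_mul_of_deriv_eq_mul {a b q : R} (hb : IsUnit b) (hba : b′ = a * b)
    (hqa : q′ = a * q) : ∃ k : K, q = algebraMap K R k * b := by
  obtain ⟨u, rfl⟩ := hb
  have hq : q = q * ↑u⁻¹ * u := by rw [mul_assoc, Units.inv_mul, mul_one]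
  have hconst : (q * ↑u⁻¹ : R)′ = 0 := by
    refine u.isUnit.mul_left_eq_zero.mp ?_
    have hleibniz : q′ = (q * ↑u⁻¹ : R) * (u : R)′ + u * (q * ↑u⁻¹ : R)′ := by
      conv_lhs => rw [hq, Derivation.leibniz, smul_eq_mul, smul_eq_mul]
    linear_combination -hleibniz + hqa - (q * ↑u⁻¹ : R) * hba + a * hq
  obtain ⟨k, hk⟩ := mem_range_of_deriv_eq_zero K hconst
  exact ⟨k, by rw [hk, ← hq]⟩

lemma exists_algebraMap_mul_of_deriv_eq_mul_of_ne_zero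
    (heigen : ∀ a : R, (∃ b : R, b ≠ 0 ∧ b′ = a * b) → ∃ b : R, IsUnit b ∧ b′ = a * b)
    {a q r : R} (hr : r ≠ 0) (hqa : q′ = a * q) (hra : r′ = a * r) :
    ∃ k : K, q = algebraMap K R k * r := by
  obtain ⟨b, hb, hba⟩ := heigen a ⟨r, hr, hra⟩
  obtain ⟨k, rfl⟩ := exists_algebraMap_mul_of_deriv_eq_mul (K := K) hb hba hqa
  obtain ⟨l, rfl⟩ := exists_algebraMap_mul_of_deriv_eq_mul (K := K) hb hba hra
  have hl : l ≠ 0 := by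
    rintro rfl
    exact hr (by rw [map_zero, zero_mul])
  exact ⟨k / l, by rw [← mul_assoc, ← map_mul, div_mul_cancel₀ k hl]⟩

end Constants

section Centralizer

open Polynomial

variable {K : Type*}

section CommRing

variable [CommRing K] [Ring S] [Algebra K S]

lemma mem_centralizer_singleton {P s : S} :
    s ∈ Subalgebra.centralizer K {P} ↔ s ∈ centralizerOf P := by
  rw [Subalgebra.mem_centralizer_iff]
  exact ⟨fun hs => (hs P rfl).symm, fun hs p hp => hp ▸ hs.symm⟩

/-- The centralizer of `P` as a `K[X]`-algebra, with `X` acting as `P`. -/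
abbrev centralizerAlgebra (P : S) : Algebra K[X] (Subalgebra.centralizer K {P}) :=
  (aeval ⟨P, mem_centralizer_singleton.mpr rfl⟩).toRingHom.toAlgebra' fun f v => by
    have hf : aeval P f ∈ Subalgebra.centralizer K (Subalgebra.centralizer K {P}) :=
      Algebra.adjoin_le_centralizer_centralizer K {P} (aeval_mem_adjoin_singleton K P)
    refine Subtype.ext ?_
    simpa using (hf (v : S) v.2).symm

attribute [local instance] centralizerAlgebra

variable {P : S}

lemma coe_centralizer_smul (f : K[X]) (v : Subalgebra.centralizer K {P}) :
    ((f • v : Subalgebra.centralizer K {P}) : S) = aeval P f * v := by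
  change ((aeval _ f : Subalgebra.centralizer K {P}) : S) * v = _
  rw [coe_aeval_mk_apply]

lemma isFreeModuleOfRankAtMost_of_basis {m n : ℕ} (hmn : m ≤ n)
    (b : Module.Basis (Fin m) K[X] (Subalgebra.centralizer K {P})) :
    IsFreeModuleOfRankAtMost (Set.range (aeval P : K[X] → S)) (centralizerOf P) n := by
  have coe_sum_smul (f : Fin m → K[X]) :
      ((∑ i, f i • b i : Subalgebra.centralizer K {P}) : S) = ∑ i, aeval P (f i) * b i := by
    rw [AddSubmonoidClass.coe_finsetSum]
    exact Finset.sum_congr rfl fun i _ => coe_centralizer_smul (f i) (b i)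
  refine ⟨m, hmn, fun i => b i, fun i => mem_centralizer_singleton.mp (b i).2, fun e he => ?_⟩
  let v : Subalgebra.centralizer K {P} := ⟨e, mem_centralizer_singleton.mpr he⟩
  refine ⟨fun i => aeval P (b.repr v i), ⟨fun i => ⟨_, rfl⟩, ?_⟩, ?_⟩
  · rw [← coe_sum_smul, b.sum_repr]
  · rintro c ⟨hc, hec⟩
    choose f hf using hc
    obtain rfl : (fun i => aeval P (f i)) = c := funext hf
    have hv : v = ∑ i, f i • b i := Subtype.ext (hec.trans (coe_sum_smul f).symm)
    simp only [hv, b.repr_sum_self]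

end CommRing

section Field

variable [Field K] [CommRing R] [Algebra K R] [Ring S] [Algebra K S] {ι : R →+* S} {P : S}

attribute [local instance] centralizerAlgebra

lemma exists_bivariate_annihilator [Nontrivial R]
    (hι : ∀ k, ι (algebraMap K R k) = algebraMap K S k)
    [Module.Finite K[X] (Subalgebra.centralizer K {P})] {Q : S} (hQ : Q ∈ centralizerOf P) :
    ∃ c : ℕ × ℕ →₀ R, c ≠ 0 ∧ (∀ p, c p ∈ Set.range (algebraMap K R)) ∧
      (c.sum fun p b => ι b * P ^ p.1 * Q ^ p.2) = 0 := by
  let v : Subalgebra.centralizer K {P} := ⟨Q, mem_centralizer_singleton.mpr hQ⟩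
  have : IsScalarTower K K[X] (Subalgebra.centralizer K {P}) :=
    IsScalarTower.of_algebraMap_eq fun k => (aeval_C _ k).symm
  obtain ⟨F, hFmonic, hF⟩ := IsIntegral.of_finite K[X] v
  let b : Module.Basis (ℕ × ℕ) K K[X][X] := (basisMonomials K).smulTower (basisMonomials K[X])
  let φ : K[X][X] →ₗ[K] S :=
    (Subalgebra.val _).toLinearMap ∘ₗ (aeval v).toLinearMap.restrictScalars K
  have φ_b (p : ℕ × ℕ) : φ (b p) = P ^ p.1 * Q ^ p.2 := by
    simp [φ, b, Module.Basis.smulTower_apply, coe_centralizer_smul, aeval_monomial, v]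
  refine ⟨(b.repr F).mapRange (algebraMap K R) (map_zero _), fun h0 => ?_, fun p => ⟨_, rfl⟩, ?_⟩
  · refine hFmonic.ne_zero (b.repr.map_eq_zero_iff.mp ?_)
    exact Finsupp.mapRange_injective _ (map_zero _) (algebraMap K R).injective
      (h0.trans Finsupp.mapRange_zero.symm)
  · rw [Finsupp.sum_mapRange_index (by simp)]
    calc ((b.repr F).sum fun p k => ι (algebraMap K R k) * P ^ p.1 * Q ^ p.2)
      _ = (b.repr F).sum fun p k => φ (k • b p) :=
        Finsupp.sum_congr fun p _ => by
          rw [map_smul, φ_b, hι, mul_assoc, Algebra.smul_def]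
      _ = φ F := by
        rw [← map_finsuppSum, ← Finsupp.linearCombination_apply, b.linearCombination_repr]
      _ = 0 := congrArg Subtype.val hF

lemma polysIn_range (hι : ∀ k, ι (algebraMap K R k) = algebraMap K S k) :
    polysIn ι (Set.range (algebraMap K R)) P = Set.range (aeval P : K[X] → S) := by
  ext s
  constructor
  · rintro ⟨d, hd, rfl⟩
    choose k hk using hd
    refine (AlgHom.mem_range (aeval P)).mp (sum_mem fun j _ => ⟨monomial j (k j), ?_⟩)
    simp [aeval_monomial, ← hι, hk]
  · rintro ⟨f, rfl⟩
    refine ⟨f.toFinsupp.coeff.mapRange (algebraMap K R) (map_zero _), fun j => ⟨_, rfl⟩, ?_⟩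
    rw [Finsupp.sum_mapRange_index (by simp), aeval_def, eval₂_eq_sum]
    simp only [hι]
    rfl

end Field
end Centralizer

section CentralizerOfOreElement

open Polynomial Differential

variable {K : Type*} [Field K] [CommRing R] [Differential R] [Algebra K R]
  [Differential.ContainConstants K R] [Ring S] {ι : R →+* S} {x : S}
  (h : IsOreExtension ι (RingHom.id R) (Differential.deriv : R → R) x)

namespace IsOreExtension

lemma exists_leadingCoeff_eq_algebraMap_mul
    (heigen : ∀ a : R, (∃ b : R, b ≠ 0 ∧ b′ = a * b) → ∃ b : R, IsUnit b ∧ b′ = a * b)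
    {P : S} (hn : ((h.symbol P).natDegree : R) ≠ 0) (hP : IsUnit (h.symbol P).leadingCoeff)
    {s t : S} (hs : Commute P s) (ht : Commute P t) (ht0 : t ≠ 0)
    (hst : (h.symbol s).natDegree = (h.symbol t).natDegree) :
    ∃ k : K, (h.symbol s).leadingCoeff = algebraMap K R k * (h.symbol t).leadingCoeff := by
  have hunit : IsUnit ((h.symbol P).natDegree * (h.symbol P).leadingCoeff) := by
    refine IsUnit.mul ?_ hP
    rw [← map_natCast (algebraMap K R)] at hn ⊢
    exact (IsUnit.mk0 _ (ne_zero_of_map hn)).map _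
  obtain ⟨u, hu⟩ := hunit
  have deriv_leadingCoeff {v : S} (hv : Commute P v) : (h.symbol v).leadingCoeff′ =
      ↑u⁻¹ * (h.symbol v).natDegree * (h.symbol P).leadingCoeff′ * (h.symbol v).leadingCoeff := by
    have hPv := h.natDegree_mul_leadingCoeff_mul_deriv_of_commute hv
    rw [← hu] at hPv
    rw [← Units.inv_mul_cancel_left u (h.symbol v).leadingCoeff′, hPv]
    ring
  refine exists_algebraMap_mul_of_deriv_eq_mul_of_ne_zero heigen ?_
    (deriv_leadingCoeff hs) (hst ▸ deriv_leadingCoeff ht)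
  exact leadingCoeff_ne_zero.mpr ((map_ne_zero_iff h.symbol h.symbol.injective).mpr ht0)

variable [Algebra K S]

attribute [local instance] centralizerAlgebra

theorem isDegreeFunction_centralizer (hι : ∀ k, ι (algebraMap K R k) = algebraMap K S k)
    (heigen : ∀ a : R, (∃ b : R, b ≠ 0 ∧ b′ = a * b) → ∃ b : R, IsUnit b ∧ b′ = a * b)
    {P : S} (hn : ((h.symbol P).natDegree : R) ≠ 0) (hP : IsUnit (h.symbol P).leadingCoeff) :
    IsDegreeFunction K (h.symbol P).natDegree
      fun v : Subalgebra.centralizer K {P} => (h.symbol v).degree where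
  isNonarchimedean v w := by
    simpa only [Subalgebra.coe_add, map_add] using degree_add_le (h.symbol v) (h.symbol w)
  eq_bot_iff v := by
    rw [degree_eq_bot, map_eq_zero_iff h.symbol h.symbol.injective, ZeroMemClass.coe_eq_zero]
  C_smul k hk v := by
    rw [coe_centralizer_smul, aeval_C, ← hι, h.symbol_map_mul,
      degree_C_mul_of_isUnit ((IsUnit.mk0 k hk).map _)]
  X_smul v := by
    have : Nontrivial R := ⟨_, _, hn⟩
    rw [coe_centralizer_smul, aeval_X, h.degree_symbol_mul hP,
      degree_eq_natDegree (leadingCoeff_ne_zero.mp hP.ne_zero)]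
  exists_sub_lt v w hv hvw := by
    have symbol_v_ne_zero : h.symbol v ≠ 0 :=
      (map_ne_zero_iff h.symbol h.symbol.injective).mpr (mt ZeroMemClass.coe_eq_zero.mp hv)
    have symbol_w_ne_zero : h.symbol w ≠ 0 := by
      rwa [← degree_ne_bot, ← hvw, degree_ne_bot]
    have commute_coe (u : Subalgebra.centralizer K {P}) : Commute P u :=
      (mem_centralizer_singleton.mp u.2).symm
    obtain ⟨k, hk⟩ := h.exists_leadingCoeff_eq_algebraMap_mul (K := K) heigen hn hP (commute_coe v)
      (commute_coe w) ((map_ne_zero_iff h.symbol h.symbol.injective).mp symbol_w_ne_zero)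
      (natDegree_eq_of_degree_eq hvw)
    have k_ne_zero : k ≠ 0 := by
      rintro rfl
      rw [map_zero, zero_mul, leadingCoeff_eq_zero] at hk
      exact symbol_v_ne_zero hk
    have k_unit : IsUnit (algebraMap K R k) := (IsUnit.mk0 k k_ne_zero).map _
    refine ⟨k, ?_⟩
    rw [Subalgebra.coe_sub, coe_centralizer_smul, aeval_C, ← hι, map_sub, h.symbol_map_mul]
    refine degree_sub_lt_left ?_ symbol_v_ne_zero ?_
    · rw [degree_C_mul_of_isUnit k_unit, hvw]
    · rw [leadingCoeff_C_mul_of_isUnit k_unit, hk]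

theorem exists_basis_centralizer (hι : ∀ k, ι (algebraMap K R k) = algebraMap K S k)
    (heigen : ∀ a : R, (∃ b : R, b ≠ 0 ∧ b′ = a * b) → ∃ b : R, IsUnit b ∧ b′ = a * b)
    {P : S} (hn : ((h.symbol P).natDegree : R) ≠ 0) (hP : IsUnit (h.symbol P).leadingCoeff) :
    ∃ m ≤ (h.symbol P).natDegree,
      Nonempty (Module.Basis (Fin m) K[X] (Subalgebra.centralizer K {P})) :=
  (h.isDegreeFunction_centralizer hι heigen hn hP).exists_basis
    (Nat.pos_of_ne_zero fun h0 => hn (by rw [h0, Nat.cast_zero]))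

end IsOreExtension
end CentralizerOfOreElement

theorem carlson_goodearl_general [CommRing R] [Ring S]
    (ι : R →+* S) (δ : R → R) (x : S) (h : IsOreExtension ι (RingHom.id R) δ x)
    (hF : IsFieldSubset {a : R | δ a = 0})
    (heigen : ∀ a : R, (∃ b : R, b ≠ 0 ∧ δ b = a * b) → ∃ b : R, IsUnit b ∧ δ b = a * b)
    (P : S) (n : ℕ) (hn : (n : R) ≠ 0) (hdeg : oreDeg h P = n)
    (hlc : IsUnit (oreLeadCoeff h P)) :
    IsFreeModuleOfRankAtMost (polysIn ι {a : R | δ a = 0} P) (centralizerOf P) n ∧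
      ∀ Q : S, P * Q = Q * P →
        ∃ c : ℕ × ℕ →₀ R, c ≠ 0 ∧ (∀ p, c p ∈ {a : R | δ a = 0}) ∧
          (c.sum fun p b => ι b * P ^ p.1 * Q ^ p.2) = 0 := by
  subst hdeg
  let _ : Differential R := h.toDifferential
  let _ : Field (constants R) := (isField_constants hF).toField
  let _ : Algebra (constants R) S := (ι.comp (constants R).subtype).toAlgebra' fun a s =>
    h.commute_map_of_deriv_eq_zero a.2 s
  let _ := centralizerAlgebra (K := constants R) P
  rw [← h.natDegree_symbol] at hn ⊢
  rw [← h.leadingCoeff_symbol] at hlc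
  have : Nontrivial R := ⟨_, _, hn⟩
  have hconst : {a : R | δ a = 0} = Set.range (algebraMap (constants R) R) :=
    Subtype.range_coe.symm
  obtain ⟨m, hm, ⟨b⟩⟩ :=
    h.exists_basis_centralizer (K := constants R) (fun _ => rfl) heigen hn hlc
  have := Module.Finite.of_basis b
  rw [hconst]
  refine ⟨?_, fun Q hQ => exists_bivariate_annihilator (ι := ι) (fun _ => rfl) hQ.symm⟩
  rw [polysIn_range (ι := ι) fun _ => rfl]
  exact isFreeModuleOfRankAtMost_of_basis hm b

/-- **Carlson–Goodearl.** Let `R` be a commutative ring with a derivation `δ`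
whose ring of constants is a field `F` of characteristic zero. Assume that for each
`a ∈ R`, if `{b : δ b = a * b}` contains a nonzero element, then it contains an
invertible element. If `P ∈ S = R[x; id, δ]` has positive degree `n` with invertible
leading coefficient, then `C_S(P)` is a free `F[P]`-module of rank at most `n`;
consequently any `Q` commuting with `P` is annihilated together with `P` by a nonzero
polynomial with coefficients in `F`. -/
theorem carlson_goodearl [CommRing R] [Ring S]
    (ι : R →+* S) (δ : R → R) (x : S) (h : IsOreExtension ι (RingHom.id R) δ x)
    (hF : IsFieldSubset {a : R | δ a = 0})
    (hFchar : ∀ m : ℕ, m ≠ 0 → (m : R) ≠ 0)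
    (heigen : ∀ a : R, (∃ b : R, b ≠ 0 ∧ δ b = a * b) → ∃ b : R, IsUnit b ∧ δ b = a * b)
    (P : S) (n : ℕ) (hn : 0 < n) (hdeg : oreDeg h P = n)
    (hlc : IsUnit (oreLeadCoeff h P)) :
    IsFreeModuleOfRankAtMost (polysIn ι {a : R | δ a = 0} P) (centralizerOf P) n ∧
      ∀ Q : S, P * Q = Q * P →
        ∃ c : ℕ × ℕ →₀ R, c ≠ 0 ∧ (∀ p, c p ∈ {a : R | δ a = 0}) ∧
          (c.sum fun p b => ι b * P ^ p.1 * Q ^ p.2) = 0 :=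
  carlson_goodearl_general ι δ x h hF heigen P n (hFchar n hn.ne') hdeg hlc
end
end
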